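/- arXiv:2110.15908 — 2 statements merged into one kernel-verified Lean document; each statement's English description precedes it below -/
import Mathlib

section
/- Let X be a smooth extremal surface of degree q+1 in ℙ³(k) and let L be any line on X. Then L contains exactly q²+1 star points of X; equivalently, there are exactly q²+1 stars on X containing L. -/
open Module

/-! Basic setup: `k` is an algebraically closed field of characteristic `p > 0`,
`q = p^e`.  We model ℙ³(k) via linear subspaces of `k⁴ = Fin 4 → k`:
points, lines and planes of ℙ³(k) are subspaces of dimension 1, 2 and 3
respectively.  A hypersurface cut out by a homogeneous form is recorded by its
affine cone in `k⁴`. -/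

/-- The Frobenius form in 4 variables determined by a 4×4 matrix `A`:
`∑ i j, A i j * x i ^ q * x j`, a homogeneous form of degree `q+1`. -/
def frobForm {k : Type*} [Field k] (q : ℕ) (A : Matrix (Fin 4) (Fin 4) k)
    (x : Fin 4 → k) : k :=
  ∑ i, ∑ j, A i j * x i ^ q * x j

/-- The affine cone in `k⁴` of the extremal surface in ℙ³(k) cut out by the
Frobenius form with matrix `A`; a point of ℙ³(k) lies on the surface iff its
homogeneous coordinate representatives lie in this set. -/
def extremalCone (k : Type*) [Field k] (q : ℕ) (A : Matrix (Fin 4) (Fin 4) k) :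
    Set (Fin 4 → k) :=
  {x | frobForm q A x = 0}

/-- A point of ℙ³(k): a 1-dimensional subspace of `k⁴`. -/
def IsPoint {k : Type*} [Field k] (c : Submodule k (Fin 4 → k)) : Prop :=
  finrank k c = 1

/-- A line of ℙ³(k): a 2-dimensional subspace of `k⁴`. -/
def IsLine {k : Type*} [Field k] (L : Submodule k (Fin 4 → k)) : Prop :=
  finrank k L = 2

/-- A plane of ℙ³(k): a 3-dimensional subspace of `k⁴`. -/
def IsPlane {k : Type*} [Field k] (H : Submodule k (Fin 4 → k)) : Prop :=
  finrank k H = 3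

/-- `L` is a line lying on the surface with affine cone `X`. -/
def IsLineOn {k : Type*} [Field k] (X : Set (Fin 4 → k))
    (L : Submodule k (Fin 4 → k)) : Prop :=
  IsLine L ∧ (L : Set (Fin 4 → k)) ⊆ X

/-- Two lines of ℙ³(k) meet iff the corresponding subspaces of `k⁴` intersect
nontrivially. -/
def MeetsLine {k : Type*} [Field k] (L M : Submodule k (Fin 4 → k)) : Prop :=
  L ⊓ M ≠ ⊥

/-- Two lines of ℙ³(k) are skew iff the corresponding subspaces of `k⁴`
intersect trivially. -/
def SkewLine {k : Type*} [Field k] (L M : Submodule k (Fin 4 → k)) : Prop :=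
  L ⊓ M = ⊥

/-- `IsStarAt q X S c`: `S` is a star on the surface with affine cone `X`,
centered at the point `c`, i.e. a set of `q+1` distinct lines on the surface
all passing through `c`. -/
def IsStarAt {k : Type*} [Field k] (q : ℕ) (X : Set (Fin 4 → k))
    (S : Set (Submodule k (Fin 4 → k))) (c : Submodule k (Fin 4 → k)) : Prop :=
  IsPoint c ∧ S.ncard = q + 1 ∧ ∀ L ∈ S, IsLineOn X L ∧ c ≤ L

/-- `S` is a star on the surface with affine cone `X`. -/
def IsStar {k : Type*} [Field k] (q : ℕ) (X : Set (Fin 4 → k))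
    (S : Set (Submodule k (Fin 4 → k))) : Prop :=
  ∃ c, IsStarAt q X S c

/-- `c` is a star point of the surface with affine cone `X`. -/
def IsStarPoint {k : Type*} [Field k] (q : ℕ) (X : Set (Fin 4 → k))
    (c : Submodule k (Fin 4 → k)) : Prop :=
  ∃ S, IsStarAt q X S c

/-- `H` is a star plane of the surface with affine cone `X`, centered at `c`:
the plane section `X ∩ H` is the union of a star centered at `c`. -/
def IsStarPlaneAt {k : Type*} [Field k] (q : ℕ) (X : Set (Fin 4 → k))
    (H c : Submodule k (Fin 4 → k)) : Prop :=
  IsPlane H ∧ ∃ S, IsStarAt q X S c ∧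
    X ∩ (H : Set (Fin 4 → k)) = ⋃ L ∈ S, (L : Set (Fin 4 → k))

/-- An element of `Aut(X)`: since every projective linear automorphism of
ℙ³(k) is represented by an invertible linear map of `k⁴` (uniquely up to
scalars, which act trivially on subspaces and preserve every cone), `g ∈
PGL(4,k)` with `g(X) = X` corresponds to a linear automorphism of `k⁴`
mapping the affine cone `X` onto itself. -/
def PreservesCone {k : Type*} [Field k] (X : Set (Fin 4 → k))
    (g : (Fin 4 → k) ≃ₗ[k] (Fin 4 → k)) : Prop :=
  (⇑g) '' X = X

/-! The surface is the set of isotropic vectors of a nondegenerate form `B` that is `q`-th power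
semilinear in its first argument. A point `v` of the surface lies on two of its lines exactly when
the right orthogonal `v^⊥` (the tangent plane) is also left orthogonal to `v`. At such a point `B`
descends to a nondegenerate form on the two-dimensional space `v^⊥ / v`, whose isotropic points are
the lines through `v`. Along a line `L` of the surface, being such a point is in turn a
nondegenerate Frobenius equation in two variables, of degree `q ^ 2 + 1`. Finally, a nondegenerate
Frobenius form of degree `Q + 1` in two variables has `Q + 1` distinct zeros, since its
dehomogenisation is separable. -/

section FrobeniusPolynomial

open Polynomial

variable {k : Type*} [Field k] {Q : ℕ} {a b c d : k}

theorem separable_C_mul_X_pow_succ_add_C_mul_X_pow_add_C_mul_X_add_C (hQ : (Q : k) = 0)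
    (h : a * d - b * c ≠ 0) :
    (C a * X ^ (Q + 1) + C b * X ^ Q + C c * X + C d).Separable := by
  rw [separable_def']
  refine ⟨C (a * d - b * c)⁻¹ * C a, C (a * d - b * c)⁻¹ * -(C a * X + C b), ?_⟩
  have hinv : C (a * d - b * c)⁻¹ * (C a * C d - C b * C c) = 1 := by
    rw [← C_mul, ← C_mul, ← C_sub, ← C_mul, inv_mul_cancel₀ h, C_1]
  have hder : derivative (C a * X ^ (Q + 1) + C b * X ^ Q + C c * X + C d) =
      C a * X ^ Q + C c := by
    simp [derivative_X_pow, hQ]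
  rw [hder, ← hinv]
  ring

theorem ncard_setOf_mul_pow_succ_add_mul_pow_add_mul_add_eq_zero [IsSepClosed k] (hQ₀ : Q ≠ 0)
    (hQ : (Q : k) = 0) (ha : a ≠ 0) (h : a * d - b * c ≠ 0) :
    {s : k | a * s ^ (Q + 1) + b * s ^ Q + c * s + d = 0}.ncard = Q + 1 := by
  set f : k[X] := C a * X ^ (Q + 1) + C b * X ^ Q + C c * X + C d with hf
  have hsep : f.Separable := separable_C_mul_X_pow_succ_add_C_mul_X_pow_add_C_mul_X_add_C hQ h
  have hdeg : f.natDegree = Q + 1 := by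
    rw [hf]
    compute_degree!
    simpa [hQ₀] using ha
  have hroots : {s : k | a * s ^ (Q + 1) + b * s ^ Q + c * s + d = 0} = f.rootSet k := by
    ext s
    rw [mem_rootSet, and_iff_right hsep.ne_zero]
    simp [hf]
  rw [hroots, ← Nat.card_coe_set_eq, Nat.card_eq_fintype_card,
    card_rootSet_eq_natDegree hsep (IsSepClosed.splits_codomain _ hsep), hdeg]

theorem ne_zero_of_forall_apply_eq_pow {σ : k →+* k} (hσ : ∀ x, σ x = x ^ Q) : Q ≠ 0 := by
  rintro rfl
  simpa using hσ 0

theorem ne_id_of_forall_apply_eq_pow [IsSepClosed k] {σ : k →+* k} (hσ : ∀ x, σ x = x ^ Q)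
    (hQ : (Q : k) = 0) : σ ≠ RingHom.id k := by
  rintro rfl
  have hQ₀ := ne_zero_of_forall_apply_eq_pow hσ
  have hQ₁ : Q ≠ 1 := by
    rintro rfl
    simp at hQ
  obtain ⟨s, hs⟩ := IsSepClosed.exists_root_C_mul_X_pow_add_C_mul_X_add_C (1 : k) (-1) (-1) hQ
    (by omega) (by simp)
  refine one_ne_zero (α := k) ?_
  linear_combination -hσ s - hs

end FrobeniusPolynomial

section Sesquilinear

variable {k : Type*} [Field k] {V : Type*} [AddCommGroup V] [Module k V] {σ : k →+* k}
  {B : V →ₛₗ[σ] V →ₗ[k] k}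

theorem apply_eq_zero_of_forall_mem_apply_self_eq_zero (hσ : σ ≠ RingHom.id k)
    {M : Submodule k V} (hM : ∀ x ∈ M, B x x = 0) {x y : V} (hx : x ∈ M) (hy : y ∈ M) :
    B x y = 0 := by
  have hline (t : k) : t * B x y + σ t * B y x = 0 := by
    have := hM _ (M.add_mem hx (M.smul_mem t hy))
    simpa [hM x hx, hM y hy] using this
  obtain ⟨t, ht⟩ := DFunLike.ne_iff.mp hσ
  refine (mul_eq_zero.mp (?_ : (σ t - t) * B x y = 0)).resolve_left (sub_ne_zero.mpr ht)
  have h₁ := hline 1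
  rw [map_one] at h₁
  linear_combination σ t * h₁ - hline t

/-- The form `B` is reflexive at the vector `v`. For a vector `v` of the cone `B x x = 0`, the
condition `B v x = 0` on `x` defines the tangent plane at `v`; this notion singles out the star
points among the points of the cone. -/
def IsReflAt (B : V →ₛₗ[σ] V →ₗ[k] k) (v : V) : Prop :=
  ∀ x, B v x = 0 → B x v = 0

variable [FiniteDimensional k V]

theorem finrank_add_finrank_le_of_forall_apply_eq_zero (hB : B.SeparatingRight)
    {M N : Submodule k V} (h : ∀ x ∈ M, ∀ y ∈ N, B x y = 0) :
    finrank k M + finrank k N ≤ finrank k V := by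
  obtain ⟨W, hW⟩ := M.exists_isCompl
  let b := finBasis k W
  let Φ : N →ₗ[k] Fin (finrank k W) → k := LinearMap.pi fun i => (B (b i)).comp N.subtype
  have hΦ : Function.Injective Φ := by
    rw [injective_iff_map_eq_zero]
    intro y hy
    have hWy : (B.flip y).comp W.subtype = 0 := b.ext fun i => congrFun hy i
    refine Subtype.ext (hB y fun x => ?_)
    obtain ⟨m, hm, w, hw, rfl⟩ :=
      Submodule.mem_sup.mp (hW.sup_eq_top ▸ Submodule.mem_top : x ∈ M ⊔ W)
    have hwy : B w y = 0 := LinearMap.congr_fun hWy ⟨w, hw⟩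
    simp [h m hm y y.2, hwy]
  have hle := LinearMap.finrank_le_finrank_of_injective hΦ
  rw [finrank_fin_fun] at hle
  have := Submodule.finrank_add_eq_of_isCompl hW
  omega

theorem separatingLeft_of_separatingRight (hB : B.SeparatingRight) : B.SeparatingLeft := by
  intro x hx
  have h := finrank_add_finrank_le_of_forall_apply_eq_zero hB (M := k ∙ x) (N := ⊤) (by
    intro z hz y _
    obtain ⟨a, rfl⟩ := Submodule.mem_span_singleton.mp hz
    simp [hx y])
  rw [finrank_top] at h
  by_contra hx₀
  rw [finrank_span_singleton hx₀] at h
  omega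

theorem finrank_ker_apply_add_one (hB : B.SeparatingRight) {v : V} (hv : v ≠ 0) :
    finrank k (B v).ker + 1 = finrank k V :=
  Dual.finrank_ker_add_one_of_ne_zero fun h =>
    hv (separatingLeft_of_separatingRight hB v (LinearMap.congr_fun h))

theorem exists_dual_family {ι : Type*} [Finite ι] [DecidableEq ι] (hB : B.SeparatingRight)
    {u : ι → V} (hu : LinearIndependent k u) :
    ∃ w : ι → V, ∀ i j, B (u i) (w j) = if i = j then 1 else 0 := by
  have := Fintype.ofFinite ι
  let Φ : V →ₗ[k] ι → k := LinearMap.pi fun i => B (u i)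
  have hker : ∀ x ∈ Submodule.span k (Set.range u), ∀ y ∈ Φ.ker, B x y = 0 := by
    intro x hx y hy
    have hle : Submodule.span k (Set.range u) ≤ (B.flip y).ker := by
      rw [Submodule.span_le]
      rintro _ ⟨i, rfl⟩
      exact congrFun hy i
    exact hle hx
  have hsurj : Function.Surjective Φ := by
    rw [← LinearMap.range_eq_top]
    apply Submodule.eq_top_of_finrank_eq
    have h₁ := finrank_add_finrank_le_of_forall_apply_eq_zero hB hker
    have h₂ := Φ.finrank_range_add_finrank_ker
    have h₃ := Φ.range.finrank_le
    rw [finrank_span_eq_card hu] at h₁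
    rw [finrank_fintype_fun_eq_card] at h₃ ⊢
    omega
  choose w hw using fun j => hsurj (Pi.single j 1)
  refine ⟨w, fun i j => ?_⟩
  rw [← Pi.single_apply, ← hw j]
  rfl

theorem mem_of_forall_mem_apply_eq_zero (hB : B.SeparatingRight) {L : Submodule k V}
    (hL : ∀ x ∈ L, ∀ y ∈ L, B x y = 0) (hLV : finrank k V ≤ 2 * finrank k L) {z : V}
    (hz : ∀ x ∈ L, B x z = 0) : z ∈ L := by
  have horth : ∀ x ∈ L, ∀ y ∈ L ⊔ k ∙ z, B x y = 0 := by
    intro x hx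
    have hle : L ⊔ k ∙ z ≤ (B x).ker :=
      sup_le (hL x hx) ((Submodule.span_singleton_le_iff_mem _ _).mpr (hz x hx))
    exact fun y hy => hle hy
  have h := finrank_add_finrank_le_of_forall_apply_eq_zero hB horth
  have heq := Submodule.eq_of_le_of_finrank_le (le_sup_left : L ≤ L ⊔ k ∙ z) (by omega)
  rw [heq]
  exact Submodule.mem_sup_right (Submodule.mem_span_singleton_self z)

end Sesquilinear

section PointsOfALine

variable {k : Type*} [Field k] {V : Type*} [AddCommGroup V] [Module k V]

theorem eq_span_singleton_of_finrank_eq_one {c : Submodule k V} (hc : finrank k c = 1) {v : V}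
    (hv : v ∈ c) (hv₀ : v ≠ 0) : c = k ∙ v := by
  have := FiniteDimensional.of_finrank_pos (hc ▸ one_pos)
  refine (Submodule.eq_of_le_of_finrank_eq ?_ ?_).symm
  · rwa [Submodule.span_singleton_le_iff_mem]
  · rw [finrank_span_singleton hv₀, hc]

theorem exists_eq_span_singleton_of_finrank_eq_one {c : Submodule k V} (hc : finrank k c = 1) :
    ∃ v ≠ 0, c = k ∙ v := by
  obtain ⟨v, hv, hv₀⟩ := c.exists_mem_ne_zero_of_ne_bot (by rintro rfl; simp at hc)
  exact ⟨v, hv₀, eq_span_singleton_of_finrank_eq_one hc hv hv₀⟩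

theorem exists_linearIndependent_pair_span_eq {N : Submodule k V} (hN : finrank k N = 2) {u₁ : V}
    (hu₁ : u₁ ∈ N) (hu₁₀ : u₁ ≠ 0) :
    ∃ u₂, LinearIndependent k ![u₁, u₂] ∧ Submodule.span k {u₁, u₂} = N := by
  have := FiniteDimensional.of_finrank_pos (hN ▸ two_pos)
  obtain ⟨u₂, hu₂, hu₂'⟩ : ∃ u₂ ∈ N, u₂ ∉ k ∙ u₁ := by
    by_contra! h
    have hle := Submodule.finrank_mono (show N ≤ k ∙ u₁ from h)
    rw [hN, finrank_span_singleton hu₁₀] at hle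
    omega
  have hli : LinearIndependent k ![u₁, u₂] := by
    rw [LinearIndependent.pair_iff' hu₁₀]
    exact fun a ha => hu₂' (Submodule.mem_span_singleton.mpr ⟨a, ha⟩)
  refine ⟨u₂, hli, Submodule.eq_of_le_of_finrank_eq ?_ ?_⟩
  · rw [Submodule.span_le]
    exact Set.pair_subset hu₁ hu₂
  · rw [hN, ← Matrix.range_cons_cons_empty u₁ u₂ ![], finrank_span_eq_card hli, Fintype.card_fin]

theorem span_singleton_smul_add_injective {u₁ u₂ : V} (h : LinearIndependent k ![u₁, u₂]) :
    Function.Injective fun s : k => k ∙ (s • u₁ + u₂) := by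
  intro s t hst
  obtain ⟨r, hr⟩ : ∃ r : k, r • (t • u₁ + u₂) = s • u₁ + u₂ :=
    Submodule.mem_span_singleton.mp (hst.le (Submodule.mem_span_singleton_self _))
  obtain ⟨h₁, h₂⟩ := LinearIndependent.pair_iff.mp h (r * t - s) (r - 1) (by
    linear_combination (norm := module) hr)
  linear_combination t * h₂ - h₁

theorem exists_eq_span_singleton_smul_add {u₁ u₂ : V} {c : Submodule k V} (hc : finrank k c = 1)
    (hle : c ≤ Submodule.span k {u₁, u₂}) (hu₁ : u₁ ∉ c) : ∃ s : k, c = k ∙ (s • u₁ + u₂) := by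
  obtain ⟨v, hv₀, rfl⟩ := exists_eq_span_singleton_of_finrank_eq_one hc
  obtain ⟨a, b, rfl⟩ := Submodule.mem_span_pair.mp (hle (Submodule.mem_span_singleton_self v))
  have hb : b ≠ 0 := by
    rintro rfl
    have ha : a ≠ 0 := by
      rintro rfl
      simp at hv₀
    exact hu₁ (Submodule.mem_span_singleton.mpr ⟨a⁻¹, by simp [smul_smul, ha]⟩)
  refine ⟨b⁻¹ * a, ?_⟩
  rw [← Submodule.span_singleton_smul_eq (IsUnit.mk0 b⁻¹ (inv_ne_zero hb)), smul_add, smul_smul,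
    smul_smul, inv_mul_cancel₀ hb, one_smul]

end PointsOfALine

section IsotropicPoints

variable {k : Type*} [Field k] {V : Type*} [AddCommGroup V] [Module k V] {σ : k →+* k}
  {B : V →ₛₗ[σ] V →ₗ[k] k} {Q : ℕ}

theorem forall_mem_span_singleton_apply_self_eq_zero_iff {v : V} :
    (∀ x ∈ k ∙ v, B x x = 0) ↔ B v v = 0 := by
  refine ⟨fun h => h v (Submodule.mem_span_singleton_self v), fun h x hx => ?_⟩
  obtain ⟨a, rfl⟩ := Submodule.mem_span_singleton.mp hx
  simp [h]

theorem apply_self_smul_add (hσ : ∀ x, σ x = x ^ Q) (s : k) (u₁ u₂ : V) :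
    B (s • u₁ + u₂) (s • u₁ + u₂) =
      B u₁ u₁ * s ^ (Q + 1) + B u₁ u₂ * s ^ Q + B u₂ u₁ * s + B u₂ u₂ := by
  simp only [map_add, map_smulₛₗ, LinearMap.add_apply, LinearMap.smul_apply, smul_eq_mul,
    RingHom.id_apply, hσ]
  ring

variable {N : Submodule k V}

theorem mul_sub_mul_ne_zero_of_forall_apply_eq_zero {u₁ u₂ : V}
    (hu : LinearIndependent k ![u₁, u₂])
    (hB : ∀ y ∈ Submodule.span k {u₁, u₂},
      (∀ x ∈ Submodule.span k {u₁, u₂}, B x y = 0) → y = 0)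
    (h₁ : B u₁ u₁ ≠ 0) : B u₁ u₁ * B u₂ u₂ - B u₁ u₂ * B u₂ u₁ ≠ 0 := by
  intro hdet
  have hy : B u₁ u₂ • u₁ + -B u₁ u₁ • u₂ = 0 := by
    refine hB _ (Submodule.mem_span_pair.mpr ⟨_, _, rfl⟩) fun x hx => ?_
    obtain ⟨a, b, rfl⟩ := Submodule.mem_span_pair.mp hx
    simp only [map_add, map_smulₛₗ, LinearMap.add_apply, LinearMap.smul_apply, smul_eq_mul,
      RingHom.id_apply]
    linear_combination -σ b * hdet
  exact h₁ (neg_eq_zero.mp (LinearIndependent.pair_iff.mp hu _ _ hy).2)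

theorem ncard_isotropic_points [IsSepClosed k] (hσ : ∀ x, σ x = x ^ Q) (hQ : (Q : k) = 0)
    (hN : finrank k N = 2) (hB : ∀ y ∈ N, (∀ x ∈ N, B x y = 0) → y = 0) :
    {c : Submodule k V | c ≤ N ∧ finrank k c = 1 ∧ ∀ x ∈ c, B x x = 0}.ncard = Q + 1 := by
  have hN₀ : N ≠ ⊥ := by
    rintro rfl
    simp at hN
  obtain ⟨u₁, hu₁, ha⟩ : ∃ u₁ ∈ N, B u₁ u₁ ≠ 0 := by
    by_contra! h
    exact hN₀ ((Submodule.eq_bot_iff N).mpr fun y hy => hB y hy fun x hx =>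
      apply_eq_zero_of_forall_mem_apply_self_eq_zero (ne_id_of_forall_apply_eq_pow hσ hQ) h hx hy)
  obtain ⟨u₂, hu, rfl⟩ := exists_linearIndependent_pair_span_eq hN hu₁ (by rintro rfl; simp at ha)
  have hdet := mul_sub_mul_ne_zero_of_forall_apply_eq_zero hu hB ha
  have hQ₀ := ne_zero_of_forall_apply_eq_pow hσ
  rw [← ncard_setOf_mul_pow_succ_add_mul_pow_add_mul_add_eq_zero hQ₀ hQ ha hdet,
    ← Set.ncard_image_of_injective _ (span_singleton_smul_add_injective hu)]
  congr 1
  ext c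
  simp only [Set.mem_ofPred_eq, Set.mem_image, ← apply_self_smul_add hσ]
  constructor
  · rintro ⟨hcN, hc, hciso⟩
    obtain ⟨s, rfl⟩ := exists_eq_span_singleton_smul_add hc hcN fun h => ha (hciso u₁ h)
    exact ⟨s, hciso _ (Submodule.mem_span_singleton_self _), rfl⟩
  · rintro ⟨s, hs, rfl⟩
    refine ⟨?_, finrank_span_singleton fun h => ?_,
      forall_mem_span_singleton_apply_self_eq_zero_iff.mpr hs⟩
    · rw [Submodule.span_singleton_le_iff_mem]
      exact Submodule.mem_span_pair.mpr ⟨s, 1, by rw [one_smul]⟩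
    · exact one_ne_zero (LinearIndependent.pair_iff.mp hu s 1 (by rwa [one_smul])).2

end IsotropicPoints

section StarForm

variable {k : Type*} [Field k] {V : Type*} [AddCommGroup V] [Module k V] {σ : k →+* k}

/-- The Frobenius form of degree `q ^ 2 + 1` that cuts out the star points on an isotropic line `L`
with basis `u`, where `w` is dual to `u` with respect to `B`: it sends `(x, y)` to `B (m x) y`,
where `m x = B x (w 1) • w 0 - B x (w 0) • w 1` spans, modulo `L`, the right orthogonal of
`x ∈ L`. -/
def starForm (B : V →ₛₗ[σ] V →ₗ[k] k) (w : Fin 2 → V) : V →ₛₗ[σ.comp σ] V →ₗ[k] k :=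
  haveI : RingHomCompTriple σ σ (σ.comp σ) := ⟨rfl⟩
  B.comp ((LinearMap.toSpanSingleton k V (w 0)).comp (B.flip (w 1)) -
    (LinearMap.toSpanSingleton k V (w 1)).comp (B.flip (w 0)))

variable {B : V →ₛₗ[σ] V →ₗ[k] k} {w : Fin 2 → V}

theorem starForm_apply (x y : V) :
    starForm B w x y = B (B x (w 1) • w 0 - B x (w 0) • w 1) y := by
  simp [starForm]

variable [FiniteDimensional k V] {L : Submodule k V}

theorem sub_sum_smul_mem {ι : Type*} [Fintype ι] [DecidableEq ι] (hB : B.SeparatingRight)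
    (hL : ∀ x ∈ L, ∀ y ∈ L, B x y = 0) (hLV : finrank k V ≤ 2 * finrank k L) (u : Basis ι k L)
    {w : ι → V} (hw : ∀ i j, B (u i) (w j) = if i = j then 1 else 0) (x : V) :
    x - ∑ i, B (u i) x • w i ∈ L := by
  refine mem_of_forall_mem_apply_eq_zero hB hL hLV fun y hy => ?_
  have hzero : (B.flip (x - ∑ i, B (u i) x • w i)).comp L.subtype = 0 := u.ext fun i => by
    simp [hw]
  exact LinearMap.congr_fun hzero ⟨y, hy⟩

section Dual

variable (hB : B.SeparatingRight) (hV : finrank k V = 4) (hL : ∀ x ∈ L, ∀ y ∈ L, B x y = 0)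
  (u : Basis (Fin 2) k L) (hw : ∀ i j, B (u i) (w j) = if i = j then 1 else 0)

include hB hV hL hw

theorem exists_eq_add_smul_add_smul (x : V) :
    ∃ l ∈ L, x = l + (B (u 0) x • w 0 + B (u 1) x • w 1) := by
  have hLV : finrank k V ≤ 2 * finrank k L := by
    rw [hV, finrank_eq_card_basis u, Fintype.card_fin]
  refine ⟨_, sub_sum_smul_mem hB hL hLV u hw x, ?_⟩
  rw [Fin.sum_univ_two, sub_add_cancel]

theorem eq_zero_of_forall_starForm_apply_eq_zero {y : V} (hy : y ∈ L)
    (h : ∀ x ∈ L, starForm B w x y = 0) : y = 0 := by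
  have h₀ : B (w 0) y = 0 := by simpa [starForm_apply, hw] using h _ (u 1).2
  have h₁ : B (w 1) y = 0 := by simpa [starForm_apply, hw] using h _ (u 0).2
  refine hB y fun x => ?_
  obtain ⟨l, hl, hx⟩ := exists_eq_add_smul_add_smul hB hV hL u hw x
  rw [hx]
  simp [hL l hl y hy, h₀, h₁]

theorem starForm_apply_self_eq_zero_iff {v : V} (hv : v ∈ L) :
    starForm B w v v = 0 ↔ IsReflAt B v := by
  rw [starForm_apply]
  constructor
  · intro h x hx
    by_contra hxv
    obtain ⟨l, hl, hx'⟩ := exists_eq_add_smul_add_smul hB hV hL u hw x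
    generalize B (u 0) x = a, B (u 1) x = b at hx'
    subst hx'
    simp only [map_add, map_sub, map_smulₛₗ, LinearMap.add_apply, LinearMap.sub_apply,
      LinearMap.smul_apply, smul_eq_mul, RingHom.id_apply, hL v hv l hl, hL l hl v hv,
      zero_add] at h hx hxv
    have hσx : σ a * σ (B v (w 0)) + σ b * σ (B v (w 1)) = 0 := by
      rw [← map_mul, ← map_mul, ← map_add, hx, map_zero]
    have hw₀ : B v (w 0) = 0 := by
      refine (map_eq_zero σ).mp ((mul_eq_zero.mp ?_).resolve_right hxv)
      linear_combination B (w 0) v * hσx - σ b * h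
    have hw₁ : B v (w 1) = 0 := by
      refine (map_eq_zero σ).mp ((mul_eq_zero.mp ?_).resolve_right hxv)
      linear_combination B (w 1) v * hσx + σ a * h
    have hv₀ : v = 0 := by
      refine separatingLeft_of_separatingRight hB v fun y => ?_
      obtain ⟨m, hm, hy⟩ := exists_eq_add_smul_add_smul hB hV hL u hw y
      rw [hy]
      simp [hL v hv m hm, hw₀, hw₁]
    exact hxv (by simp [hv₀])
  · exact fun h => h _ (by simp [mul_comm])

end Dual

theorem ncard_points_isReflAt [IsSepClosed k] {q : ℕ} (hσ : ∀ x, σ x = x ^ q)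
    (hq : (q : k) = 0) (hB : B.SeparatingRight) (hV : finrank k V = 4)
    (hL₂ : finrank k L = 2) (hL : ∀ x ∈ L, ∀ y ∈ L, B x y = 0) :
    {c : Submodule k V | c ≤ L ∧ finrank k c = 1 ∧ ∀ v ∈ c, IsReflAt B v}.ncard = q ^ 2 + 1 := by
  let u : Basis (Fin 2) k L := finBasisOfFinrankEq k L hL₂
  have hu : LinearIndependent k fun i => (u i : V) :=
    u.linearIndependent.map' L.subtype L.ker_subtype
  obtain ⟨w, hw⟩ := exists_dual_family hB hu
  have hσ₂ (x : k) : σ.comp σ x = x ^ q ^ 2 := by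
    rw [RingHom.comp_apply, hσ, hσ, ← pow_mul, sq]
  have hq₂ : ((q ^ 2 : ℕ) : k) = 0 := by
    rw [Nat.cast_pow, hq, zero_pow two_ne_zero]
  rw [← ncard_isotropic_points (B := starForm B w) hσ₂ hq₂ hL₂ fun y hy =>
    eq_zero_of_forall_starForm_apply_eq_zero hB hV hL u hw hy]
  congr 1
  ext c
  refine and_congr_right fun hc => and_congr_right fun _ => forall₂_congr fun v hv => ?_
  exact (starForm_apply_self_eq_zero_iff hB hV hL u hw (hc hv)).symm

end StarForm

section LinesThroughAPoint

variable {k : Type*} [Field k] {V : Type*} [AddCommGroup V] [Module k V]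
  {σ : k →+* k} {B : V →ₛₗ[σ] V →ₗ[k] k} {v : V} {N : Submodule k V}

theorem le_ker_of_isotropic (hσ : σ ≠ RingHom.id k) {M : Submodule k V}
    (hM : ∀ x ∈ M, B x x = 0) (hvM : v ∈ M) : M ≤ (B v).ker := fun _ hx =>
  apply_eq_zero_of_forall_mem_apply_self_eq_zero hσ hM hvM hx

theorem mem_span_singleton_sup {x : V} : x ∈ k ∙ v ⊔ N ↔ ∃ a : k, ∃ y ∈ N, a • v + y = x := by
  simp [Submodule.mem_sup, Submodule.mem_span_singleton]

variable [FiniteDimensional k V]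

theorem finrank_add_one_eq_of_disjoint_of_sup_eq {H : Submodule k V} (hv : v ≠ 0)
    (hdisj : Disjoint (k ∙ v) N) (hsup : k ∙ v ⊔ N = H) : finrank k N + 1 = finrank k H := by
  have h := Submodule.finrank_sup_add_finrank_inf_eq (k ∙ v) N
  rw [hdisj.eq_bot, hsup, finrank_bot, finrank_span_singleton hv] at h
  omega

theorem eq_zero_of_forall_apply_eq_zero_of_isReflAt (hB : B.SeparatingRight) (hv : v ≠ 0)
    (hrefl : IsReflAt B v) (hdisj : Disjoint (k ∙ v) N) (hsup : k ∙ v ⊔ N = (B v).ker) {y : V}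
    (hy : y ∈ N) (h : ∀ x ∈ N, B x y = 0) : y = 0 := by
  have horth : ∀ x ∈ (B v).ker, ∀ z ∈ k ∙ v ⊔ k ∙ y, B x z = 0 := by
    intro x hx
    have hxv : B x v = 0 := hrefl x hx
    have hxy : B x y = 0 := by
      obtain ⟨a, n, hn, rfl⟩ := mem_span_singleton_sup.mp (hsup.ge hx)
      have hvy : B v y = 0 := hsup.le (Submodule.mem_sup_right hy)
      simp [hvy, h n hn]
    have hle : k ∙ v ⊔ k ∙ y ≤ (B x).ker := by
      simp [Submodule.span_singleton_le_iff_mem, hxv, hxy]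
    exact fun z hz => hle hz
  have hle := finrank_add_finrank_le_of_forall_apply_eq_zero hB horth
  have hker := finrank_ker_apply_add_one hB hv
  have heq : k ∙ v = k ∙ v ⊔ k ∙ y := Submodule.eq_of_le_of_finrank_le le_sup_left (by
    rw [finrank_span_singleton hv]
    omega)
  have hyv : y ∈ k ∙ v := by
    rw [heq]
    exact Submodule.mem_sup_right (Submodule.mem_span_singleton_self y)
  exact Submodule.disjoint_def.mp hdisj y hyv hy

theorem bijOn_sup_isotropic (hσ : σ ≠ RingHom.id k) (hv : v ≠ 0) (hvv : B v v = 0)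
    (hrefl : IsReflAt B v) (hdisj : Disjoint (k ∙ v) N) (hsup : k ∙ v ⊔ N = (B v).ker) :
    Set.BijOn (fun P => k ∙ v ⊔ P)
      {P | P ≤ N ∧ finrank k P = 1 ∧ ∀ x ∈ P, B x x = 0}
      {M | finrank k M = 2 ∧ (∀ x ∈ M, B x x = 0) ∧ v ∈ M} := by
  refine ⟨?_, ?_, ?_⟩
  · rintro P ⟨hPN, hP, hiso⟩
    refine ⟨?_, fun x hx => ?_, Submodule.mem_sup_left (Submodule.mem_span_singleton_self v)⟩
    · rw [← finrank_add_one_eq_of_disjoint_of_sup_eq hv (hdisj.mono_right hPN) rfl, hP]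
    · obtain ⟨a, y, hy, rfl⟩ := mem_span_singleton_sup.mp hx
      have hvy : B v y = 0 := hsup.le (Submodule.mem_sup_right (hPN hy))
      simp [hvv, hvy, hrefl y hvy, hiso y hy]
  · rintro P ⟨hP, -⟩ P' ⟨hP', -⟩ h
    have inf_eq {P : Submodule k V} (hP : P ≤ N) : (P ⊔ k ∙ v) ⊓ N = P := by
      rw [sup_inf_assoc_of_le _ hP, hdisj.eq_bot, sup_bot_eq]
    rw [← inf_eq hP, ← inf_eq hP', sup_comm, show k ∙ v ⊔ P = k ∙ v ⊔ P' from h, sup_comm]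
  · rintro M ⟨hM, hiso, hvM⟩
    have hsup' : k ∙ v ⊔ N ⊓ M = M := by
      rw [← sup_inf_assoc_of_le _ (by simpa using hvM), hsup,
        inf_eq_right.mpr (le_ker_of_isotropic hσ hiso hvM)]
    have hrank := finrank_add_one_eq_of_disjoint_of_sup_eq hv (hdisj.mono_right inf_le_left) hsup'
    exact ⟨N ⊓ M, ⟨inf_le_left, by omega, fun x hx => hiso x hx.2⟩, hsup'⟩

theorem ncard_isotropic_lines_of_isReflAt [IsSepClosed k] {q : ℕ} (hσ : ∀ x, σ x = x ^ q)
    (hq : (q : k) = 0) (hB : B.SeparatingRight) (hV : finrank k V = 4) (hv : v ≠ 0)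
    (hvv : B v v = 0) (hrefl : IsReflAt B v) :
    {M : Submodule k V | finrank k M = 2 ∧ (∀ x ∈ M, B x x = 0) ∧ v ∈ M}.ncard = q + 1 := by
  obtain ⟨N, hdisj, hsup⟩ := IsModularLattice.exists_disjoint_and_sup_eq
    (show k ∙ v ≤ (B v).ker by simpa using hvv)
  have hN : finrank k N = 2 := by
    have := finrank_add_one_eq_of_disjoint_of_sup_eq hv hdisj hsup
    have := finrank_ker_apply_add_one hB hv
    omega
  rw [← ncard_isotropic_points hσ hq hN fun y =>
    eq_zero_of_forall_apply_eq_zero_of_isReflAt hB hv hrefl hdisj hsup]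
  have hσ₁ := ne_id_of_forall_apply_eq_pow hσ hq
  exact (bijOn_sup_isotropic hσ₁ hv hvv hrefl hdisj hsup).ncard_eq.symm

theorem isReflAt_of_isotropic_lines (hσ : σ ≠ RingHom.id k) (hB : B.SeparatingRight)
    (hV : finrank k V = 4) (hv : v ≠ 0) {L M : Submodule k V} (hL₂ : finrank k L = 2)
    (hL : ∀ x ∈ L, B x x = 0) (hM₂ : finrank k M = 2) (hM : ∀ x ∈ M, B x x = 0) (hvL : v ∈ L)
    (hvM : v ∈ M) (hLM : L ≠ M) : IsReflAt B v := by
  have hlt : L < L ⊔ M := by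
    rw [left_lt_sup]
    exact fun h => hLM (Submodule.eq_of_le_of_finrank_eq h (by rw [hL₂, hM₂])).symm
  have hrank := Submodule.finrank_lt_finrank_of_lt hlt
  have hker := finrank_ker_apply_add_one hB hv
  have heq : L ⊔ M = (B v).ker := Submodule.eq_of_le_of_finrank_le
    (sup_le (le_ker_of_isotropic hσ hL hvL) (le_ker_of_isotropic hσ hM hvM)) (by omega)
  intro x hx
  obtain ⟨l, hl, m, hm, rfl⟩ := Submodule.mem_sup.mp (heq.ge hx)
  rw [map_add, LinearMap.add_apply, apply_eq_zero_of_forall_mem_apply_self_eq_zero hσ hL hl hvL,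
    apply_eq_zero_of_forall_mem_apply_self_eq_zero hσ hM hm hvM, add_zero]

end LinesThroughAPoint

section Stars

variable {k : Type*} [Field k]

/-- The set of lines through the point `c` on the surface with affine cone `X`. It is the only
candidate for a star at `c` on a smooth extremal surface. -/
def linesThrough (X : Set (Fin 4 → k)) (c : Submodule k (Fin 4 → k)) :
    Set (Submodule k (Fin 4 → k)) :=
  {M | IsLineOn X M ∧ c ≤ M}

/-- The affine cone of the surface of isotropic vectors of the sesquilinear form `B`. -/
def isotropicCone {σ : k →+* k} (B : (Fin 4 → k) →ₛₗ[σ] (Fin 4 → k) →ₗ[k] k) :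
    Set (Fin 4 → k) :=
  {x | B x x = 0}

theorem IsStarPoint.isPoint {X : Set (Fin 4 → k)} {q : ℕ} {c : Submodule k (Fin 4 → k)}
    (hc : IsStarPoint q X c) : IsPoint c :=
  hc.choose_spec.1

theorem IsPoint.eq_inf {c L M : Submodule k (Fin 4 → k)} (hc : IsPoint c) (hL : IsLine L)
    (hM : IsLine M) (hLM : M ≠ L) (hcL : c ≤ L) (hcM : c ≤ M) : c = L ⊓ M := by
  have hlt : L ⊓ M < L := by
    rw [inf_lt_left]
    exact fun h => hLM (Submodule.eq_of_le_of_finrank_eq h (hL.trans hM.symm)).symm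
  have hrank := Submodule.finrank_lt_finrank_of_lt hlt
  rw [IsLine] at hL
  rw [IsPoint] at hc
  exact Submodule.eq_of_le_of_finrank_le (le_inf hcL hcM) (by omega)

variable [IsSepClosed k] {σ : k →+* k} {B : (Fin 4 → k) →ₛₗ[σ] (Fin 4 → k) →ₗ[k] k} {q : ℕ}
  (hσ : ∀ x, σ x = x ^ q) (hq : (q : k) = 0) (hB : B.SeparatingRight)

include hσ hq hB

theorem ncard_linesThrough_of_isReflAt {v : Fin 4 → k} (hv : v ≠ 0) (hvv : B v v = 0)
    (hrefl : IsReflAt B v) : (linesThrough (isotropicCone B) (k ∙ v)).ncard = q + 1 := by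
  rw [← ncard_isotropic_lines_of_isReflAt hσ hq hB (finrank_fin_fun k) hv hvv hrefl]
  congr 1
  ext M
  simp [linesThrough, IsLineOn, IsLine, isotropicCone, Set.subset_def, and_assoc]

theorem isStarPoint_span_singleton_iff {v : Fin 4 → k} (hv : v ≠ 0) :
    IsStarPoint q (isotropicCone B) (k ∙ v) ↔ B v v = 0 ∧ IsReflAt B v := by
  constructor
  · rintro ⟨S, -, hS, hlines⟩
    have hq₀ := ne_zero_of_forall_apply_eq_pow hσ
    obtain ⟨L, hLS⟩ := Set.nonempty_of_ncard_ne_zero (by omega : S.ncard ≠ 0)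
    obtain ⟨M, hMS, hML⟩ := Set.exists_ne_of_one_lt_ncard (show 1 < S.ncard by omega) L
    obtain ⟨⟨hL₂, hL⟩, hvL⟩ := hlines L hLS
    obtain ⟨⟨hM₂, hM⟩, hvM⟩ := hlines M hMS
    rw [Submodule.span_singleton_le_iff_mem] at hvL hvM
    exact ⟨hL hvL, isReflAt_of_isotropic_lines (ne_id_of_forall_apply_eq_pow hσ hq) hB
      (finrank_fin_fun k) hv hL₂ hL hM₂ hM hvL hvM hML.symm⟩
  · rintro ⟨hvv, hrefl⟩
    exact ⟨_, finrank_span_singleton hv, ncard_linesThrough_of_isReflAt hσ hq hB hv hvv hrefl,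
      fun _ => id⟩

theorem ncard_linesThrough_of_isStarPoint {c : Submodule k (Fin 4 → k)}
    (hc : IsStarPoint q (isotropicCone B) c) :
    (linesThrough (isotropicCone B) c).ncard = q + 1 := by
  obtain ⟨v, hv, rfl⟩ := exists_eq_span_singleton_of_finrank_eq_one hc.isPoint
  obtain ⟨hvv, hrefl⟩ := (isStarPoint_span_singleton_iff hσ hq hB hv).mp hc
  exact ncard_linesThrough_of_isReflAt hσ hq hB hv hvv hrefl

theorem eq_linesThrough_of_isStarAt {S : Set (Submodule k (Fin 4 → k))}
    {c : Submodule k (Fin 4 → k)} (hS : IsStarAt q (isotropicCone B) S c) :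
    S = linesThrough (isotropicCone B) c := by
  have hcard := ncard_linesThrough_of_isStarPoint hσ hq hB ⟨S, hS⟩
  exact Set.eq_of_subset_of_ncard_le hS.2.2 (by rw [hcard, hS.2.1])
    (Set.finite_of_ncard_pos (hcard ▸ q.succ_pos))

theorem bijOn_linesThrough {L : Submodule k (Fin 4 → k)} (hL : IsLineOn (isotropicCone B) L) :
    Set.BijOn (linesThrough (isotropicCone B)) {c | IsStarPoint q (isotropicCone B) c ∧ c ≤ L}
      {S | IsStar q (isotropicCone B) S ∧ L ∈ S} := by
  refine ⟨?_, ?_, ?_⟩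
  · rintro c ⟨⟨S, hS⟩, hcL⟩
    refine ⟨⟨c, ?_⟩, hL, hcL⟩
    rwa [← eq_linesThrough_of_isStarAt hσ hq hB hS]
  · rintro c ⟨hc, hcL⟩ c' ⟨hc', hcL'⟩ h
    have hq₀ := ne_zero_of_forall_apply_eq_pow hσ
    have hcard := ncard_linesThrough_of_isStarPoint hσ hq hB hc
    obtain ⟨M, hM, hML⟩ := Set.exists_ne_of_one_lt_ncard
      (show 1 < (linesThrough (isotropicCone B) c).ncard by omega) L
    have hM' : M ∈ linesThrough (isotropicCone B) c' := h ▸ hM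
    rw [hc.isPoint.eq_inf hL.1 hM.1.1 hML hcL hM.2,
      hc'.isPoint.eq_inf hL.1 hM.1.1 hML hcL' hM'.2]
  · rintro S ⟨⟨c, hS⟩, hLS⟩
    exact ⟨c, ⟨⟨S, hS⟩, (hS.2.2 L hLS).2⟩, (eq_linesThrough_of_isStarAt hσ hq hB hS).symm⟩

theorem ncard_isStarPoint_and_le {L : Submodule k (Fin 4 → k)} (hL : IsLineOn (isotropicCone B) L) :
    {c | IsStarPoint q (isotropicCone B) c ∧ c ≤ L}.ncard = q ^ 2 + 1 := by
  have hiso : ∀ x ∈ L, ∀ y ∈ L, B x y = 0 := fun _ hx _ hy =>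
    apply_eq_zero_of_forall_mem_apply_self_eq_zero (ne_id_of_forall_apply_eq_pow hσ hq) hL.2 hx hy
  rw [← ncard_points_isReflAt hσ hq hB (finrank_fin_fun k) hL.1 hiso]
  congr 1
  ext c
  constructor
  · rintro ⟨hc, hcL⟩
    have hc₁ := hc.isPoint
    refine ⟨hcL, hc₁, fun v hv => ?_⟩
    obtain rfl | hv₀ := eq_or_ne v 0
    · simp [IsReflAt]
    · rw [eq_span_singleton_of_finrank_eq_one hc₁ hv hv₀] at hc
      exact ((isStarPoint_span_singleton_iff hσ hq hB hv₀).mp hc).2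
  · rintro ⟨hcL, hc₁, hrefl⟩
    refine ⟨?_, hcL⟩
    obtain ⟨v, hv₀, rfl⟩ := exists_eq_span_singleton_of_finrank_eq_one hc₁
    have hv := Submodule.mem_span_singleton_self (R := k) v
    exact (isStarPoint_span_singleton_iff hσ hq hB hv₀).mpr ⟨hL.2 (hcL hv), hrefl v hv⟩

end Stars

section FrobeniusForm

variable {k : Type*} [Field k] {σ : k →+* k} {n : Type*} [Fintype n] [DecidableEq n]

/-- The form `(x, y) ↦ ∑ i, ∑ j, A i j * σ (x i) * y j`, whose restriction to the diagonal is the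
Frobenius form of `A` when `σ` is the `q`-th power map. -/
def frobSesqForm (σ : k →+* k) (A : Matrix n n k) : (n → k) →ₛₗ[σ] (n → k) →ₗ[k] k :=
  Matrix.toLinearMapₛₗ₂' k σ (RingHom.id k) A

theorem frobSesqForm_single (A : Matrix n n k) (i : n) (y : n → k) :
    frobSesqForm σ A (Pi.single i 1) y = A.mulVec y i := by
  simp [frobSesqForm, Matrix.toLinearMapₛₗ₂'_apply, Matrix.mulVec, dotProduct, Pi.single_apply,
    apply_ite σ, mul_comm]

theorem frobSesqForm_separatingRight {A : Matrix n n k} (hA : IsUnit A) :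
    (frobSesqForm σ A).SeparatingRight := by
  intro y hy
  apply Matrix.mulVec_injective_of_isUnit hA
  ext i
  rw [← frobSesqForm_single (σ := σ), hy, Matrix.mulVec_zero, Pi.zero_apply]

theorem frobSesqForm_apply_self {q : ℕ} (hσ : ∀ x, σ x = x ^ q)
    (A : Matrix (Fin 4) (Fin 4) k) (x : Fin 4 → k) : frobSesqForm σ A x x = frobForm q A x := by
  rw [frobSesqForm, Matrix.toLinearMapₛₗ₂'_apply, frobForm]
  refine Finset.sum_congr rfl fun i _ => Finset.sum_congr rfl fun j _ => ?_
  simp only [hσ, smul_eq_mul, RingHom.id_apply]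
  ring

theorem extremalCone_eq_isotropicCone {q : ℕ} (hσ : ∀ x, σ x = x ^ q)
    (A : Matrix (Fin 4) (Fin 4) k) : extremalCone k q A = isotropicCone (frobSesqForm σ A) := by
  ext x
  rw [extremalCone, isotropicCone, Set.mem_ofPred_eq, Set.mem_ofPred_eq,
    frobSesqForm_apply_self hσ]

end FrobeniusForm

theorem starcount_on_line_general {k : Type*} [Field k] [IsSepClosed k]
    (p e q : ℕ) (hp : p.Prime) (hchar : CharP k p) (he : 1 ≤ e) (hq : q = p ^ e)
    (A : Matrix (Fin 4) (Fin 4) k) (hA : IsUnit A)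
    (L : Submodule k (Fin 4 → k)) (hL : IsLineOn (extremalCone k q A) L) :
    {c : Submodule k (Fin 4 → k) |
        IsStarPoint q (extremalCone k q A) c ∧ c ≤ L}.ncard = q ^ 2 + 1 ∧
    {S : Set (Submodule k (Fin 4 → k)) |
        IsStar q (extremalCone k q A) S ∧ L ∈ S}.ncard = q ^ 2 + 1 := by
  have : Fact p.Prime := ⟨hp⟩
  have hσ (x : k) : iterateFrobenius k p e x = x ^ q := by rw [iterateFrobenius_def, hq]
  have hq₀ : (q : k) = 0 := (CharP.cast_eq_zero_iff k p q).mpr (hq ▸ dvd_pow_self p (by omega))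
  have hB : (frobSesqForm (iterateFrobenius k p e) A).SeparatingRight :=
    frobSesqForm_separatingRight hA
  rw [extremalCone_eq_isotropicCone hσ] at hL ⊢
  rw [← (bijOn_linesThrough hσ hq₀ hB hL).ncard_eq]
  exact ⟨ncard_isStarPoint_and_le hσ hq₀ hB hL, ncard_isStarPoint_and_le hσ hq₀ hB hL⟩

/-- Let `X` be a smooth extremal surface of degree `q+1` in
ℙ³(k) (cut out by a full-rank Frobenius form) and let `L` be any line on `X`.
Then `L` contains exactly `q²+1` star points of `X`; equivalently, there are
exactly `q²+1` stars on `X` containing `L`. -/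
theorem starcount_on_line {k : Type*} [Field k] [IsAlgClosed k]
    (p e q : ℕ) (hp : p.Prime) (hchar : CharP k p) (he : 1 ≤ e) (hq : q = p ^ e)
    (A : Matrix (Fin 4) (Fin 4) k) (hA : IsUnit A)
    (L : Submodule k (Fin 4 → k)) (hL : IsLineOn (extremalCone k q A) L) :
    {c : Submodule k (Fin 4 → k) |
        IsStarPoint q (extremalCone k q A) c ∧ c ≤ L}.ncard = q ^ 2 + 1 ∧
    {S : Set (Submodule k (Fin 4 → k)) |
        IsStar q (extremalCone k q A) S ∧ L ∈ S}.ncard = q ^ 2 + 1 :=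
  starcount_on_line_general p e q hp hchar he hq A hA L hL
end

section
/- Let X be a smooth extremal surface of degree q+1 in ℙ³(k). Then the set of all lines on X has cardinality exactly (q³+1)(q+1) = q⁴+q³+q+1. (Equivalently, since the degree is d = q+1, the surface X contains exactly d²(d²−3d+3) lines.) -/
open Module

/-!
Let `τ` be the `q`-th power map. The Frobenius form of `A` is `x ↦ B x x` for the sesquilinear form
`B x y = ∑ i j, A i j * τ (x i) * y j`, and since `τ` moves some scalar, a line lies on the surface
iff it is totally isotropic for `B`. As `A` is invertible, there is a `τ²`-semilinear map `φ` with
`B x (φ y) = τ (B y x)`. By Lang's theorem the fixed vectors of `φ` span `k⁴`; they form a space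
over the field with `q²` elements, on which `B` is Hermitian. Hence `B` has an orthonormal basis,
and any two forms of full rank are equivalent. For the split form
`τ x₀ y₃ + τ x₁ y₂ - τ x₂ y₁ - τ x₃ y₀`, reduced row echelon bases sort the totally isotropic lines
into Schubert cells, the nonempty ones having `q⁴`, `q³`, `q` and `1` elements.
-/

section FixedVectors

open Polynomial

variable {k : Type*} [Field k]

/-- Let `φ` be a semilinear map with `φ (b i) = b (i + 1)` for `i < n` and
`φ (b n) = ∑ i ≤ n, a i • b i`, where scalars are twisted by the `Q`-th power map. Solving
`φ (∑ i ≤ n, c i • b i) = ∑ i ≤ n, c i • b i` successively for `c 0, c 1, …` in terms of `t = c n`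
gives `c i = (fixedVectorPoly Q a i).eval t`. -/
noncomputable def fixedVectorPoly (Q : ℕ) (a : ℕ → k) : ℕ → k[X]
  | 0 => C (a 0) * X ^ Q
  | i + 1 => fixedVectorPoly Q a i ^ Q + C (a (i + 1)) * X ^ Q

lemma X_pow_dvd_fixedVectorPoly {Q : ℕ} (hQ : Q ≠ 0) (a : ℕ → k) (i : ℕ) :
    X ^ Q ∣ fixedVectorPoly Q a i := by
  induction i with
  | zero => exact dvd_mul_left _ _
  | succ i ih => exact dvd_add (dvd_pow ih hQ) (dvd_mul_left _ _)

lemma eq_zero_of_fixedVectorPoly_eq_zero {Q : ℕ} (hQ : 1 < Q) {a : ℕ → k} {n : ℕ}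
    (h : fixedVectorPoly Q a n = 0) : ∀ i ≤ n, a i = 0 := by
  induction n with
  | zero =>
    intro i hi
    rw [Nat.le_zero.1 hi]
    simpa [fixedVectorPoly] using h
  | succ n ih =>
    have hcoeff : (fixedVectorPoly Q a n ^ Q).coeff Q = 0 := by
      have hdvd := pow_dvd_pow_of_dvd (X_pow_dvd_fixedVectorPoly (by lia : Q ≠ 0) a n) Q
      rw [← pow_mul, X_pow_dvd_iff] at hdvd
      exact hdvd Q (by nlinarith)
    have hlast : a (n + 1) = 0 := by
      simpa [fixedVectorPoly, hcoeff] using congrArg (coeff · Q) h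
    have hprev : fixedVectorPoly Q a n = 0 := by
      rw [fixedVectorPoly, hlast, C_0, zero_mul, add_zero] at h
      exact eq_zero_of_pow_eq_zero h
    intro i hi
    rcases Nat.le_succ_iff.1 hi with hi | rfl
    · exact ih hprev i hi
    · exact hlast

lemma map_sum_smul_eq_self {V : Type*} [AddCommGroup V] [Module k V] {Q : ℕ} {σ : k →+* k}
    (hσ : ∀ a, σ a = a ^ Q) {φ : V →ₛₗ[σ] V} {b : ℕ → V} (hb : ∀ i, φ (b i) = b (i + 1))
    {a c : ℕ → k} {n : ℕ} (ha : ∑ i ∈ Finset.range (n + 1), a i • b i = b (n + 1))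
    (hc₀ : c 0 = a 0 * c n ^ Q) (hc : ∀ i, c (i + 1) = c i ^ Q + a (i + 1) * c n ^ Q) :
    φ (∑ i ∈ Finset.range (n + 1), c i • b i) = ∑ i ∈ Finset.range (n + 1), c i • b i := by
  have hcoeff : ∀ i, c (i + 1) • b (i + 1) =
      c i ^ Q • b (i + 1) + c n ^ Q • a (i + 1) • b (i + 1) := fun i => by
    rw [hc, add_smul, smul_smul, mul_comm]
  calc φ (∑ i ∈ Finset.range (n + 1), c i • b i)
      = ∑ i ∈ Finset.range n, c i ^ Q • b (i + 1) + c n ^ Q • b (n + 1) := by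
        rw [map_sum, Finset.sum_range_succ]
        simp only [LinearMap.map_smulₛₗ, hσ, hb]
    _ = ∑ i ∈ Finset.range n, c (i + 1) • b (i + 1) + c 0 • b 0 := by
        simp only [← ha, Finset.sum_range_succ', smul_add, Finset.smul_sum, hcoeff,
          Finset.sum_add_distrib, hc₀, smul_smul, add_assoc, mul_comm]
    _ = ∑ i ∈ Finset.range (n + 1), c i • b i :=
        (Finset.sum_range_succ' (fun i => c i • b i) n).symm

variable [IsAlgClosed k]

lemma exists_pow_add_mul_eq {Q : ℕ} (hQ : 1 < Q) (a d : k) : ∃ c : k, c ^ Q + a * c = d := by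
  have hdeg : (C a * X - C d).degree < (X ^ Q : k[X]).degree := by
    rw [degree_X_pow]
    refine (degree_sub_le _ _).trans_lt (max_lt ?_ ?_)
    · exact (degree_C_mul_X_le a).trans_lt (by exact_mod_cast hQ)
    · exact degree_C_le.trans_lt (by exact_mod_cast zero_lt_one.trans hQ)
  obtain ⟨c, hc⟩ := IsAlgClosed.exists_root (X ^ Q + (C a * X - C d)) (by
    rw [degree_add_eq_left_of_degree_lt hdeg, degree_X_pow]
    exact_mod_cast (zero_lt_one.trans hQ).ne')
  refine ⟨c, ?_⟩
  simp only [IsRoot.def, eval_add, eval_sub, eval_mul, eval_pow, eval_X, eval_C] at hc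
  linear_combination hc

lemma exists_ne_zero_eval_eq_self {P : k[X]} (hP : P ≠ 0) (hdvd : X ^ 2 ∣ P) :
    ∃ t ≠ 0, P.eval t = t := by
  obtain ⟨R, rfl⟩ := hdvd
  have hdeg : 0 < (X * R).degree := by
    rw [degree_mul, degree_X, degree_eq_natDegree (right_ne_zero_of_mul hP)]
    exact_mod_cast Nat.add_pos_left one_pos _
  obtain ⟨t, ht⟩ := IsAlgClosed.exists_root (X * R - C 1) (by
    rw [degree_sub_C hdeg]
    exact hdeg.ne')
  simp only [IsRoot.def, eval_sub, eval_mul, eval_X, eval_C] at ht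
  refine ⟨t, ?_, ?_⟩
  · rintro rfl
    simp at ht
  · simp only [eval_mul, eval_pow, eval_X]
    linear_combination t * ht

lemma exists_fixedVector_coeffs {Q : ℕ} (hQ : 1 < Q) {a : ℕ → k} {n : ℕ}
    (ha : ∃ i ≤ n, a i ≠ 0) :
    ∃ c : ℕ → k, c n ≠ 0 ∧ c 0 = a 0 * c n ^ Q ∧
      ∀ i, c (i + 1) = c i ^ Q + a (i + 1) * c n ^ Q := by
  obtain ⟨i, hi, hai⟩ := ha
  obtain ⟨t, ht, hPt⟩ := exists_ne_zero_eval_eq_self (P := fixedVectorPoly Q a n)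
    (fun h => hai (eq_zero_of_fixedVectorPoly_eq_zero hQ h i hi))
    ((pow_dvd_pow X hQ).trans (X_pow_dvd_fixedVectorPoly (by lia) a n))
  refine ⟨fun i => (fixedVectorPoly Q a i).eval t, ?_, ?_, fun i => ?_⟩
  · simpa only [hPt] using ht
  · simp only [hPt, fixedVectorPoly, eval_mul, eval_pow, eval_X, eval_C]
  · simp only [hPt, fixedVectorPoly, eval_add, eval_mul, eval_pow, eval_X, eval_C]

end FixedVectors

section Noetherian

lemma exists_first_mem_span {R M : Type*} [Semiring R] [AddCommMonoid M] [Module R M]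
    [IsNoetherian R M] (b : ℕ → M) :
    ∃ n, b n ∈ Submodule.span R (b '' Set.Iio n) ∧
      ∀ m < n, b m ∉ Submodule.span R (b '' Set.Iio m) := by
  classical
  let S : ℕ →o Submodule R M := ⟨fun n => Submodule.span R (b '' Set.Iio n), fun _ _ h =>
    Submodule.span_mono (Set.image_mono (Set.Iio_subset_Iio h))⟩
  have hex : ∃ n, b n ∈ S n := by
    obtain ⟨n, hn⟩ := monotone_stabilizes_iff_noetherian.mpr ‹_› S
    refine ⟨n, ?_⟩
    rw [hn (n + 1) n.le_succ]
    exact Submodule.subset_span ⟨n, n.lt_succ_self, rfl⟩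
  exact ⟨Nat.find hex, Nat.find_spec hex, fun m hm => Nat.find_min hex hm⟩

lemma sum_smul_ne_zero_of_last_notMem_span {K V : Type*} [DivisionRing K] [AddCommGroup V]
    [Module K V] {b : ℕ → V} {n : ℕ} (hb : b n ∉ Submodule.span K (b '' Set.Iio n)) {c : ℕ → K}
    (hc : c n ≠ 0) : ∑ i ∈ Finset.range (n + 1), c i • b i ≠ 0 := by
  intro h
  rw [Finset.sum_range_succ] at h
  refine hb ((Submodule.smul_mem_iff _ hc).1 ?_)
  rw [eq_neg_of_add_eq_zero_right h]
  exact Submodule.neg_mem _ (Submodule.sum_mem _ fun i hi => Submodule.smul_mem _ _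
    (Submodule.subset_span ⟨i, Finset.mem_range.1 hi, rfl⟩))

end Noetherian

section Lang

variable {k V : Type*} [Field k] [IsAlgClosed k] [AddCommGroup V] [Module k V]
  {Q : ℕ} {σ : k →+* k}

lemma exists_ne_zero_fixed [FiniteDimensional k V] [Nontrivial V] (hQ : 1 < Q)
    (hσ : ∀ a, σ a = a ^ Q) {φ : V →ₛₗ[σ] V} (hφ : Function.Injective φ) :
    ∃ v, v ≠ 0 ∧ φ v = v := by
  obtain ⟨v, hv⟩ := exists_ne (0 : V)
  let b : ℕ → V := fun i => φ^[i] v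
  have hb : ∀ i, φ (b i) = b (i + 1) := fun i => (Function.iterate_succ_apply' _ _ _).symm
  have hb₀ : ∀ i, b i ≠ 0 := fun i hi =>
    hv (hφ.iterate i (hi.trans (iterate_map_zero φ i).symm))
  obtain ⟨m, hm, hfirst⟩ := exists_first_mem_span (R := k) b
  obtain ⟨n, rfl⟩ : ∃ n, m = n + 1 :=
    Nat.exists_eq_succ_of_ne_zero (by rintro rfl; exact hb₀ 0 (by simpa using hm))
  rw [← Finset.coe_range, Submodule.mem_span_image_finset_iff_exists_fun'] at hm
  obtain ⟨a, ha⟩ := hm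
  have ha₀ : ∃ i ≤ n, a i ≠ 0 := by
    by_contra! h
    refine hb₀ (n + 1) (ha.symm.trans (Finset.sum_eq_zero fun i hi => ?_))
    rw [h i (Finset.mem_range_succ_iff.1 hi), zero_smul]
  obtain ⟨c, hcn, hc₀, hc⟩ := exists_fixedVector_coeffs hQ ha₀
  exact ⟨∑ i ∈ Finset.range (n + 1), c i • b i,
    sum_smul_ne_zero_of_last_notMem_span (hfirst n n.lt_succ_self) hcn,
    map_sum_smul_eq_self hσ hb ha hc₀ hc⟩

lemma exists_map_add_smul_eq_of_mem_span_fixed (hQ : 1 < Q) (hσ : ∀ a, σ a = a ^ Q)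
    (φ : V →ₛₗ[σ] V) (a : k) {w : V} (hw : w ∈ Submodule.span k {v | φ v = v}) :
    ∃ w' ∈ Submodule.span k {v | φ v = v}, φ w' + a • w' = w := by
  induction hw using Submodule.closure_induction with
  | zero => exact ⟨0, Submodule.zero_mem _, by simp⟩
  | add x y _ _ hx hy =>
    obtain ⟨x', hx', rfl⟩ := hx
    obtain ⟨y', hy', rfl⟩ := hy
    exact ⟨x' + y', Submodule.add_mem _ hx' hy', by rw [map_add, smul_add]; abel⟩
  | smul_mem r x hx =>
    obtain ⟨s, rfl⟩ := exists_pow_add_mul_eq hQ a r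
    refine ⟨s • x, Submodule.smul_mem _ _ (Submodule.subset_span hx), ?_⟩
    rw [LinearMap.map_smulₛₗ, hσ, hx.out, smul_smul, ← add_smul]

theorem span_fixed_eq_top [FiniteDimensional k V] (hQ : 1 < Q) (hσ : ∀ a, σ a = a ^ Q)
    {φ : V →ₛₗ[σ] V} (hφ : Function.Injective φ) : Submodule.span k {v | φ v = v} = ⊤ := by
  set W := Submodule.span k {v | φ v = v}
  have hstable : W ≤ W.comap φ := Submodule.span_le.2 fun v hv => by
    rw [SetLike.mem_coe, Submodule.mem_comap, hv.out]
    exact Submodule.subset_span hv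
  have hmem_of_map_mem : ∀ v, φ v ∈ W → v ∈ W := fun v hv => by
    obtain ⟨w, hw, hwv⟩ := exists_map_add_smul_eq_of_mem_span_fixed hQ hσ φ 0 hv
    rw [zero_smul, add_zero] at hwv
    rwa [← hφ hwv]
  -- By Artin–Schreier, a vector fixed modulo `W` can be corrected by an element of `W`.
  have hmem_of_map_sub_mem : ∀ v, φ v - v ∈ W → v ∈ W := fun v hv => by
    obtain ⟨w, hw, hwv⟩ := exists_map_add_smul_eq_of_mem_span_fixed hQ hσ φ (-1) hv
    rw [neg_one_smul, ← sub_eq_add_neg] at hwv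
    have hfixed : φ (v - w) = v - w := by
      rw [map_sub, sub_eq_sub_iff_sub_eq_sub]
      exact hwv.symm
    simpa using W.add_mem (Submodule.subset_span hfixed) hw
  by_contra hne
  have : Nontrivial (V ⧸ W) := Submodule.Quotient.nontrivial_iff.2 hne
  have hinj : Function.Injective (W.mapQ W φ hstable) := by
    rw [injective_iff_map_eq_zero]
    rintro ⟨v⟩ hv
    exact (Submodule.Quotient.mk_eq_zero W).2
      (hmem_of_map_mem v ((Submodule.Quotient.mk_eq_zero W).1 hv))
  obtain ⟨⟨v⟩, hv₀, hv⟩ := exists_ne_zero_fixed hQ hσ hinj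
  exact hv₀ ((Submodule.Quotient.mk_eq_zero W).2
    (hmem_of_map_sub_mem v ((Submodule.Quotient.eq W).1 hv)))

end Lang

section Hermitian

variable {k V : Type*} [Field k] [AddCommGroup V] [Module k V] {τ : k →+* k}

/-- `φ` is the Frobenius adapted to the sesquilinear form `B` (which is `τ`-semilinear in its first
argument): the fixed vectors of `φ` form a vector space over the field `{a | τ (τ a) = a}`, on
which `B` is a Hermitian form. -/
def IsHermitianFrobenius (B : V →ₛₗ[τ] V →ₗ[k] k) (φ : V →ₛₗ[τ.comp τ] V) : Prop :=
  ∀ x y, B x (φ y) = τ (B y x)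

namespace IsHermitianFrobenius

variable {B : V →ₛₗ[τ] V →ₗ[k] k} {φ : V →ₛₗ[τ.comp τ] V}

lemma apply_eq_of_fixed (h : IsHermitianFrobenius B φ) {v : V} (hv : φ v = v) (u : V) :
    B u v = τ (B v u) := by
  rw [← h, hv]

lemma injective (h : IsHermitianFrobenius B φ) (hB : B.SeparatingLeft) :
    Function.Injective φ := by
  rw [injective_iff_map_eq_zero]
  refine fun x hx => hB x fun y => (map_eq_zero τ).1 ?_
  rw [← h, hx, map_zero]

lemma map_mem_ker (h : IsHermitianFrobenius B φ) {v : V} (hv : φ v = v) :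
    ∀ w ∈ LinearMap.ker (B v), φ w ∈ LinearMap.ker (B v) := fun w hw => by
  have hwv : τ (B w v) = 0 := by
    rw [h.apply_eq_of_fixed hv, LinearMap.mem_ker.1 hw, map_zero, map_zero]
  rw [LinearMap.mem_ker, h, hwv]

lemma apply_eq_zero_of_mem_ker (h : IsHermitianFrobenius B φ) {v w : V} (hv : φ v = v)
    (hw : w ∈ LinearMap.ker (B v)) : B w v = 0 := by
  rw [h.apply_eq_of_fixed hv, LinearMap.mem_ker.1 hw, map_zero]

lemma separatingLeft_ker (h : IsHermitianFrobenius B φ) (hB : B.SeparatingLeft) {v : V}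
    (hv : φ v = v) (hvv : B v v ≠ 0) :
    (B.domRestrict₁₂ (LinearMap.ker (B v)) (LinearMap.ker (B v))).SeparatingLeft := by
  rintro ⟨w, hw⟩ hw₀
  rw [Submodule.mk_eq_zero]
  refine hB w fun y => ?_
  have hproj : y - (B v y / B v v) • v ∈ LinearMap.ker (B v) := by
    rw [LinearMap.mem_ker, map_sub, map_smul, smul_eq_mul, div_mul_cancel₀ _ hvv, sub_self]
  have horth : B w (y - (B v y / B v v) • v) = 0 := hw₀ ⟨_, hproj⟩
  rwa [map_sub, map_smul, h.apply_eq_zero_of_mem_ker hv hw, smul_zero, sub_zero] at horth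

end IsHermitianFrobenius

end Hermitian

section OrthonormalBasis

variable {k V : Type*} [Field k] [IsAlgClosed k] [AddCommGroup V] [Module k V]
  {q : ℕ} {τ : k →+* k}

lemma exists_map_add_self_eq (hq : 1 < q) (hτ : ∀ a, τ a = a ^ q) {d : k} (hd : τ d = d) :
    ∃ s, τ (τ s) = s ∧ τ s + s = d := by
  obtain ⟨s, hs⟩ := exists_pow_add_mul_eq hq 1 d
  rw [one_mul, ← hτ] at hs
  refine ⟨s, ?_, hs⟩
  have hτs := congrArg τ hs
  rw [map_add, hd] at hτs
  linear_combination hτs - hs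

lemma exists_map_mul_self_eq (hτ : ∀ a, τ a = a ^ q) {d : k} (hd₀ : d ≠ 0) (hd : τ d = d) :
    ∃ t, τ (τ t) = t ∧ τ t * t = d := by
  obtain ⟨t, ht⟩ := IsAlgClosed.exists_pow_nat_eq d q.succ_pos
  rw [pow_succ, ← hτ] at ht
  refine ⟨t, ?_, ht⟩
  have hτt := congrArg τ ht
  rw [map_mul, hd, ← ht, mul_comm (τ t)] at hτt
  exact mul_right_cancel₀ (left_ne_zero_of_mul (ht ▸ hd₀)) hτt

namespace IsHermitianFrobenius

variable {B : V →ₛₗ[τ] V →ₗ[k] k} {φ : V →ₛₗ[τ.comp τ] V}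

lemma apply_eq_zero_of_apply_self_eq_zero (h : IsHermitianFrobenius B φ) (hq : 1 < q)
    (hτ : ∀ a, τ a = a ^ q) (hB : ∀ v, φ v = v → B v v = 0) {u v : V} (hu : φ u = u)
    (hv : φ v = v) : B u v = 0 := by
  by_contra hne
  obtain ⟨s, hs, hs₁⟩ := exists_map_add_self_eq hq hτ (map_one τ)
  have hfixed : τ (τ (B u v)) = B u v := by
    rw [← h.apply_eq_of_fixed hu, ← h.apply_eq_of_fixed hv]
  -- The scalar is chosen so that the trace of `B u (c • v)` is `1`.
  set c := s / B u v
  have hc : τ (τ c) = c := by rw [map_div₀, map_div₀, hs, hfixed]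
  have hcB : c * B u v = s := div_mul_cancel₀ _ hne
  have hsum := hB (u + c • v) (by
    rw [map_add, hu, LinearMap.map_smulₛₗ, hv, RingHom.comp_apply, hc])
  simp only [map_add, LinearMap.map_smulₛₗ, LinearMap.add_apply, LinearMap.smul_apply,
    smul_eq_mul, hB u hu, hB v hv, RingHom.id_apply, h.apply_eq_of_fixed hu v, ← map_mul,
    hcB] at hsum
  exact one_ne_zero (by linear_combination hsum - hs₁ - hcB : (1 : k) = 0)

lemma exists_fixed_apply_self_ne_zero [FiniteDimensional k V] [Nontrivial V]
    (h : IsHermitianFrobenius B φ) (hq : 1 < q) (hτ : ∀ a, τ a = a ^ q)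
    (hB : B.SeparatingLeft) : ∃ v, φ v = v ∧ B v v ≠ 0 := by
  by_contra! hiso
  have hspan := span_fixed_eq_top (Q := q * q) (by nlinarith)
    (fun a => by rw [RingHom.comp_apply, hτ, hτ, ← pow_mul]) (h.injective hB)
  obtain ⟨u, hu, hu₀⟩ : ∃ u, φ u = u ∧ u ≠ 0 := by
    by_contra! hu
    have hsub : {v | φ v = v} ⊆ {0} := hu
    have hbot := Submodule.span_mono (R := k) hsub
    rw [hspan, Submodule.span_zero_singleton] at hbot
    exact top_ne_bot (le_bot_iff.1 hbot)
  have hker : (⊤ : Submodule k V) ≤ LinearMap.ker (B u) := hspan ▸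
    Submodule.span_le.2 fun v hv => h.apply_eq_zero_of_apply_self_eq_zero hq hτ hiso hu hv
  exact hu₀ (hB u fun v => hker Submodule.mem_top)

lemma exists_fixed_apply_self_eq_one [FiniteDimensional k V] [Nontrivial V]
    (h : IsHermitianFrobenius B φ) (hq : 1 < q) (hτ : ∀ a, τ a = a ^ q)
    (hB : B.SeparatingLeft) : ∃ v, φ v = v ∧ B v v = 1 := by
  obtain ⟨v, hv, hvv⟩ := h.exists_fixed_apply_self_ne_zero hq hτ hB
  obtain ⟨t, ht, htv⟩ := exists_map_mul_self_eq hτ (inv_ne_zero hvv)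
    (by rw [map_inv₀, ← h.apply_eq_of_fixed hv])
  refine ⟨t • v, by rw [LinearMap.map_smulₛₗ, RingHom.comp_apply, ht, hv], ?_⟩
  simp only [LinearMap.map_smulₛₗ, LinearMap.smul_apply, smul_eq_mul, RingHom.id_apply]
  rw [← mul_assoc, mul_comm t, htv, inv_mul_cancel₀ hvv]

theorem exists_orthonormal_basis {n : ℕ} [FiniteDimensional k V]
    (h : IsHermitianFrobenius B φ) (hq : 1 < q) (hτ : ∀ a, τ a = a ^ q)
    (hB : B.SeparatingLeft) (hn : finrank k V = n) :
    ∃ b : Basis (Fin n) k V, ∀ i j, B (b i) (b j) = if i = j then 1 else 0 := by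
  induction n generalizing V with
  | zero => exact ⟨finBasisOfFinrankEq k V hn, fun i => i.elim0⟩
  | succ n ih =>
    have : Nontrivial V := nontrivial_of_finrank_pos (R := k) (by lia)
    obtain ⟨v, hv, hvv⟩ := h.exists_fixed_apply_self_eq_one hq hτ hB
    have hv₀ : B v v ≠ 0 := hvv ▸ one_ne_zero
    set W := LinearMap.ker (B v)
    have hW : finrank k W = n := by
      have := Module.Dual.finrank_ker_add_one_of_ne_zero (f := B v)
        (fun h₀ => hv₀ (by rw [h₀, LinearMap.zero_apply]))
      exact Nat.succ.inj (this.trans hn)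
    obtain ⟨b, hb⟩ := ih (B := B.domRestrict₁₂ W W) (φ := φ.restrict (h.map_mem_ker hv))
      (fun x y => h x y) (h.separatingLeft_ker hB hv hv₀) hW
    have hvW : ∀ c : k, ∀ x ∈ W, c • v + x = 0 → c = 0 := fun c x hx hcx => by
      have := congrArg (B v) hcx
      rwa [map_add, map_smul, LinearMap.mem_ker.1 hx, hvv, add_zero, smul_eq_mul, mul_one,
        map_zero] at this
    have hspan : ∀ x, ∃ c : k, x + c • v ∈ W := fun x =>
      ⟨-B v x, by rw [LinearMap.mem_ker, map_add, map_smul, hvv, smul_eq_mul, mul_one,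
        add_neg_cancel]⟩
    refine ⟨Basis.mkFinCons v b hvW hspan, fun i j => ?_⟩
    rw [Basis.coe_mkFinCons]
    refine Fin.cases ?_ (fun i => ?_) i <;> refine Fin.cases ?_ (fun j => ?_) j
    · simpa using hvv
    · simp [(Fin.succ_ne_zero j).symm, W]
    · simpa using h.apply_eq_zero_of_mem_ker hv (b i).2
    · simp only [Fin.cons_succ, Function.comp_apply, Fin.succ_inj]
      exact hb i j

end IsHermitianFrobenius

end OrthonormalBasis

section IsotropicLines

variable {k V V' : Type*} [Field k] [AddCommGroup V] [Module k V] [AddCommGroup V'] [Module k V']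
  {τ : k →+* k}

/-- The totally isotropic lines of the projective space of `V`, as two-dimensional subspaces. -/
def isotropicLines (B : V →ₛₗ[τ] V →ₗ[k] k) : Set (Submodule k V) :=
  {L | finrank k L = 2 ∧ ∀ x ∈ L, ∀ y ∈ L, B x y = 0}

lemma encard_isotropicLines_congr {B : V →ₛₗ[τ] V →ₗ[k] k} {B' : V' →ₛₗ[τ] V' →ₗ[k] k}
    (g : V ≃ₗ[k] V') (hg : ∀ x y, B' (g x) (g y) = B x y) :
    (isotropicLines B).encard = (isotropicLines B').encard := by
  refine Set.encard_congr ((Submodule.orderIsoMapComap g).toEquiv.subtypeEquiv fun L => ?_)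
  refine and_congr (by rw [← g.finrank_map_eq L]; rfl) ?_
  change _ ↔ ∀ x ∈ L.map g.toLinearMap, ∀ y ∈ L.map g.toLinearMap, B' x y = 0
  simp only [Submodule.mem_map, forall_exists_index, and_imp, forall_apply_eq_imp_iff₂,
    LinearEquiv.coe_coe, hg]

lemma apply_eq_zero_of_apply_self_eq_zero {B : V →ₛₗ[τ] V →ₗ[k] k} {t : k} (ht : τ t ≠ t)
    {L : Submodule k V} (hL : ∀ x ∈ L, B x x = 0) {x y : V} (hx : x ∈ L) (hy : y ∈ L) :
    B x y = 0 := by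
  have h₁ := hL (x + y) (L.add_mem hx hy)
  have h₂ := hL (x + t • y) (L.add_mem hx (L.smul_mem t hy))
  simp only [map_add, LinearMap.map_smulₛₗ, LinearMap.add_apply, LinearMap.smul_apply, smul_eq_mul,
    RingHom.id_apply, hL x hx, hL y hy, add_zero, zero_add, mul_zero] at h₁ h₂
  refine (mul_eq_zero.1 ?_).resolve_left (sub_ne_zero.2 ht)
  linear_combination τ t * h₁ - h₂

lemma exists_linearEquiv_of_orthonormal_basis {ι : Type*} [DecidableEq ι]
    {B : V →ₛₗ[τ] V →ₗ[k] k} {B' : V' →ₛₗ[τ] V' →ₗ[k] k} (b : Basis ι k V) (b' : Basis ι k V')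
    (hb : ∀ i j, B (b i) (b j) = if i = j then 1 else 0)
    (hb' : ∀ i j, B' (b' i) (b' j) = if i = j then 1 else 0) :
    ∃ g : V ≃ₗ[k] V', ∀ x y, B' (g x) (g y) = B x y := by
  let g := b.equiv b' (Equiv.refl ι)
  have hg : (B'.compl₂ g.toLinearMap).comp g.toLinearMap = B :=
    LinearMap.ext_basis b b fun i j => by
      rw [hb, ← hb']
      simp [g]
  exact ⟨g, fun x y => by rw [← hg]; rfl⟩

end IsotropicLines

section Matrix

open Matrix

variable {ι k : Type*} [Fintype ι] [DecidableEq ι] [Field k]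

/-- The sesquilinear form `∑ i j, A i j * τ (x i) * y j` with Gram matrix `A`. When `τ` is the
`q`-th power map, the Frobenius form with matrix `A` is its restriction to the diagonal. -/
noncomputable def sesqForm (τ : k →+* k) (A : Matrix ι ι k) : (ι → k) →ₛₗ[τ] (ι → k) →ₗ[k] k :=
  Matrix.toLinearMapₛₗ₂' k τ (RingHom.id k) A

lemma sesqForm_apply (τ : k →+* k) (A : Matrix ι ι k) (x y : ι → k) :
    sesqForm τ A x y = ∑ i, ∑ j, A i j * τ (x i) * y j := by
  simp only [sesqForm, Matrix.toLinearMapₛₗ₂'_apply, smul_eq_mul, RingHom.id_apply]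
  exact Finset.sum_congr rfl fun i _ => Finset.sum_congr rfl fun j _ => by ring

lemma sesqForm_apply_eq_dotProduct (τ : k →+* k) (A : Matrix ι ι k) (x y : ι → k) :
    sesqForm τ A x y = (τ ∘ x) ⬝ᵥ A *ᵥ y := by
  simp only [sesqForm_apply, dotProduct, mulVec, Finset.mul_sum, Function.comp_apply]
  exact Finset.sum_congr rfl fun i _ => Finset.sum_congr rfl fun j _ => by ring

lemma sesqForm_separatingLeft (τ : k →+* k) {A : Matrix ι ι k} (hA : IsUnit A) :
    (sesqForm τ A).SeparatingLeft := by
  intro x hx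
  have hA' : A.SeparatingLeft :=
    separatingLeft_iff_det_ne_zero.2 ((isUnit_iff_isUnit_det A).1 hA).ne_zero
  have hτx := separatingLeft_def.1 hA' (τ ∘ x) fun y => by
    rw [← sesqForm_apply_eq_dotProduct, hx]
  exact funext fun i => (map_eq_zero τ).1 (congrFun hτx i)

lemma exists_isHermitianFrobenius (τ : k →+* k) {A : Matrix ι ι k} (hA : IsUnit A) :
    ∃ φ, IsHermitianFrobenius (sesqForm τ A) φ := by
  let φ : (ι → k) →ₛₗ[τ.comp τ] (ι → k) :=
    { toFun := fun y => A⁻¹ *ᵥ (A.map τ)ᵀ *ᵥ (τ ∘ τ ∘ y)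
      map_add' := fun x y => by
        rw [← mulVec_add, ← mulVec_add]
        congr 2
        ext i
        simp
      map_smul' := fun c y => by
        rw [← mulVec_smul, ← mulVec_smul]
        congr 2
        ext i
        simp }
  refine ⟨φ, fun x y => ?_⟩
  calc sesqForm τ A x (φ y)
      = (τ ∘ x) ⬝ᵥ (A.map τ)ᵀ *ᵥ (τ ∘ τ ∘ y) := by
        rw [sesqForm_apply_eq_dotProduct]
        change _ ⬝ᵥ A *ᵥ A⁻¹ *ᵥ _ = _
        rw [mulVec_mulVec, mul_nonsing_inv _ ((isUnit_iff_isUnit_det A).1 hA), one_mulVec]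
    _ = (A.map τ *ᵥ (τ ∘ x)) ⬝ᵥ (τ ∘ τ ∘ y) := by rw [dotProduct_mulVec, vecMul_transpose]
    _ = τ ((A *ᵥ x) ⬝ᵥ (τ ∘ y)) := by
        rw [RingHom.map_dotProduct]
        congr 1
        exact funext fun i => (RingHom.map_mulVec τ A x i).symm
    _ = τ (sesqForm τ A y x) := by rw [sesqForm_apply_eq_dotProduct, dotProduct_comm]

theorem exists_linearEquiv_sesqForm [IsAlgClosed k] {n q : ℕ} (hq : 1 < q) {τ : k →+* k}
    (hτ : ∀ a, τ a = a ^ q) {A A' : Matrix (Fin n) (Fin n) k} (hA : IsUnit A)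
    (hA' : IsUnit A') :
    ∃ g : (Fin n → k) ≃ₗ[k] (Fin n → k), ∀ x y, sesqForm τ A' (g x) (g y) = sesqForm τ A x y := by
  obtain ⟨φ, hφ⟩ := exists_isHermitianFrobenius τ hA
  obtain ⟨φ', hφ'⟩ := exists_isHermitianFrobenius τ hA'
  obtain ⟨b, hb⟩ := hφ.exists_orthonormal_basis hq hτ (sesqForm_separatingLeft τ hA)
    (finrank_fin_fun k)
  obtain ⟨b', hb'⟩ := hφ'.exists_orthonormal_basis hq hτ (sesqForm_separatingLeft τ hA')
    (finrank_fin_fun k)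
  exact exists_linearEquiv_of_orthonormal_basis b b' hb hb'

end Matrix

section Echelon

variable {k ι : Type*} [Field k] [LinearOrder ι]

/-- `u` and `v` are the rows of a `2 × ι` matrix in reduced row echelon form with pivots `i < j`. -/
structure IsEchelonPair (i j : ι) (u v : ι → k) : Prop where
  lt : i < j
  left_of_lt : ∀ l < i, u l = 0
  left_pivot : u i = 1
  left_pivot' : u j = 0
  right_of_lt : ∀ l < j, v l = 0
  right_pivot : v j = 1

namespace IsEchelonPair

variable {i j i' j' : ι} {u v u' v' x : ι → k}

lemma right_pivot' (h : IsEchelonPair i j u v) : v i = 0 := h.right_of_lt i h.lt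

lemma eq_of_mem_span (h : IsEchelonPair i j u v) (hx : x ∈ Submodule.span k {u, v}) :
    x = x i • u + x j • v := by
  obtain ⟨a, b, rfl⟩ := Submodule.mem_span_pair.1 hx
  simp [h.left_pivot, h.left_pivot', h.right_pivot, h.right_pivot']

lemma eq_smul_right_of_mem_span (h : IsEchelonPair i j u v) (hx : x ∈ Submodule.span k {u, v})
    (hxi : x i = 0) : x = x j • v := by
  conv_lhs => rw [h.eq_of_mem_span hx, hxi, zero_smul, zero_add]

lemma apply_eq_zero_of_lt (h : IsEchelonPair i j u v) (hx : x ∈ Submodule.span k {u, v}) {l : ι}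
    (hl : l < i) : x l = 0 := by
  rw [h.eq_of_mem_span hx]
  simp [h.left_of_lt l hl, h.right_of_lt l (hl.trans h.lt)]

lemma finrank_span (h : IsEchelonPair i j u v) : finrank k (Submodule.span k {u, v}) = 2 := by
  have hli : LinearIndependent k ![u, v] := by
    refine LinearIndependent.pair_iff.2 fun a b hab => ⟨?_, ?_⟩
    · simpa [h.left_pivot, h.right_pivot'] using congrFun hab i
    · simpa [h.left_pivot', h.right_pivot] using congrFun hab j
  have hrange : Set.range ![u, v] = {u, v} := by
    rw [Matrix.range_cons, Matrix.range_cons, Matrix.range_empty, Set.union_empty,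
      Set.singleton_union]
  rw [← hrange, finrank_span_eq_card hli, Fintype.card_fin]

lemma pivots_le (h : IsEchelonPair i j u v) (h' : IsEchelonPair i' j' u' v')
    (hspan : Submodule.span k {u, v} = Submodule.span k {u', v'}) : i' ≤ i ∧ (i = i' → j' ≤ j) := by
  have hu : u ∈ Submodule.span k {u', v'} := hspan ▸ Submodule.subset_span (by simp)
  have hv : v ∈ Submodule.span k {u', v'} := hspan ▸ Submodule.subset_span (by simp)
  refine ⟨le_of_not_gt fun hi => ?_, ?_⟩
  · exact one_ne_zero (h.left_pivot.symm.trans (h'.apply_eq_zero_of_lt hu hi))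
  · rintro rfl
    refine le_of_not_gt fun hj => one_ne_zero (α := k) ?_
    rw [← h.right_pivot, h'.eq_smul_right_of_mem_span hv h.right_pivot', Pi.smul_apply,
      h'.right_of_lt j hj, smul_zero]

lemma pivots_eq (h : IsEchelonPair i j u v) (h' : IsEchelonPair i' j' u' v')
    (hspan : Submodule.span k {u, v} = Submodule.span k {u', v'}) : i = i' ∧ j = j' := by
  obtain ⟨hi, hj⟩ := h.pivots_le h' hspan
  obtain ⟨hi', hj'⟩ := h'.pivots_le h hspan.symm
  have hii' := le_antisymm hi' hi
  exact ⟨hii', le_antisymm (hj' hii'.symm) (hj hii')⟩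

lemma eq_of_span_eq (h : IsEchelonPair i j u v) (h' : IsEchelonPair i j u' v')
    (hspan : Submodule.span k {u, v} = Submodule.span k {u', v'}) : u = u' ∧ v = v' := by
  have hu : u ∈ Submodule.span k {u', v'} := hspan ▸ Submodule.subset_span (by simp)
  have hv : v ∈ Submodule.span k {u', v'} := hspan ▸ Submodule.subset_span (by simp)
  constructor
  · rw [h'.eq_of_mem_span hu, h.left_pivot, h.left_pivot', one_smul, zero_smul, add_zero]
  · rw [h'.eq_of_mem_span hv, h.right_pivot, h.right_pivot', one_smul, zero_smul, zero_add]

end IsEchelonPair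

lemma exists_pivot [WellFoundedLT ι] {L : Submodule k (ι → k)} (hL : L ≠ ⊥) :
    ∃ i, (∃ u ∈ L, u i = 1) ∧ ∀ x ∈ L, ∀ l < i, x l = 0 := by
  obtain ⟨x, hx, hx₀⟩ := Submodule.exists_mem_ne_zero_of_ne_bot hL
  obtain ⟨i₀, hi₀⟩ := Function.ne_iff.1 hx₀
  obtain ⟨i, ⟨u, hu, hui⟩, hmin⟩ :=
    WellFounded.has_min (wellFounded_lt (α := ι)) {i | ∃ u ∈ L, u i ≠ 0} ⟨i₀, x, hx, hi₀⟩
  refine ⟨i, ⟨(u i)⁻¹ • u, L.smul_mem _ hu, inv_mul_cancel₀ hui⟩, fun y hy l hl => ?_⟩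
  by_contra hyl
  exact hmin l ⟨y, hy, hyl⟩ hl

lemma exists_isEchelonPair [WellFoundedLT ι] {L : Submodule k (ι → k)} (hL : finrank k L = 2) :
    ∃ i j u v, IsEchelonPair i j u v ∧ Submodule.span k {u, v} = L := by
  have : FiniteDimensional k L := FiniteDimensional.of_finrank_pos (by lia)
  obtain ⟨i, ⟨u, hu, hui⟩, hi⟩ := exists_pivot (L := L) (by rintro rfl; simp at hL)
  set M := L ⊓ LinearMap.ker (LinearMap.proj i : (ι → k) →ₗ[k] k)
  have hM : M ≠ ⊥ := fun hM => by
    have hle : L ≤ Submodule.span k {u} := fun x hx => by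
      have hmem : x - x i • u ∈ M :=
        ⟨L.sub_mem hx (L.smul_mem _ hu), by simp [LinearMap.mem_ker, hui]⟩
      rw [hM, Submodule.mem_bot, sub_eq_zero] at hmem
      exact Submodule.mem_span_singleton.2 ⟨x i, hmem.symm⟩
    have := (Submodule.finrank_mono hle).trans (finrank_span_le_card ({u} : Set (ι → k)))
    simp [hL] at this
  obtain ⟨j, ⟨v, ⟨hv, hvi⟩, hvj⟩, hj⟩ := exists_pivot hM
  have hij : i < j := by
    refine lt_of_not_ge fun hji => one_ne_zero (α := k) ?_
    rcases hji.lt_or_eq with hlt | rfl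
    · rw [← hvj, hi v hv j hlt]
    · exact hvj.symm.trans hvi
  have hpair : IsEchelonPair i j (u - u j • v) v :=
    { lt := hij
      left_of_lt := fun l hl => by simp [hi u hu l hl, hi v hv l hl]
      left_pivot := by simpa [hui] using Or.inr hvi
      left_pivot' := by simp [hvj]
      right_of_lt := hj v ⟨hv, hvi⟩
      right_pivot := hvj }
  refine ⟨i, j, _, v, hpair, Submodule.eq_of_le_of_finrank_eq ?_ (hpair.finrank_span.trans hL.symm)⟩
  exact Submodule.span_le.2 (Set.pair_subset (L.sub_mem hu (L.smul_mem _ hv)) hv)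

end Echelon

section SchubertCells

variable {k ι : Type*} [Field k] [LinearOrder ι] {τ : k →+* k}

/-- The Schubert cell with pivots `i < j` in the variety of totally isotropic lines, each line being
represented by its reduced row echelon basis. -/
def isotropicCell (B : (ι → k) →ₛₗ[τ] (ι → k) →ₗ[k] k) (i j : ι) : Set ((ι → k) × (ι → k)) :=
  {P | IsEchelonPair i j P.1 P.2 ∧
    (B P.1 P.1 = 0 ∧ B P.1 P.2 = 0) ∧ B P.2 P.1 = 0 ∧ B P.2 P.2 = 0}

lemma mk_mem_isotropicCell {B : (ι → k) →ₛₗ[τ] (ι → k) →ₗ[k] k} {i j : ι} {u v : ι → k} :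
    (u, v) ∈ isotropicCell B i j ↔
      IsEchelonPair i j u v ∧ (B u u = 0 ∧ B u v = 0) ∧ B v u = 0 ∧ B v v = 0 :=
  Iff.rfl

lemma isotropicCell_eq_empty_of_not_lt (B : (ι → k) →ₛₗ[τ] (ι → k) →ₗ[k] k) {i j : ι}
    (hij : ¬ i < j) : isotropicCell B i j = ∅ :=
  Set.eq_empty_of_forall_notMem fun _ h => hij h.1.lt

lemma forall_mem_span_pair_apply_eq_zero_iff {V : Type*} [AddCommGroup V] [Module k V]
    (B : V →ₛₗ[τ] V →ₗ[k] k) (u v : V) :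
    (∀ x ∈ Submodule.span k {u, v}, ∀ y ∈ Submodule.span k {u, v}, B x y = 0) ↔
      (B u u = 0 ∧ B u v = 0) ∧ B v u = 0 ∧ B v v = 0 := by
  constructor
  · intro h
    have hu : u ∈ Submodule.span k {u, v} := Submodule.subset_span (by simp)
    have hv : v ∈ Submodule.span k {u, v} := Submodule.subset_span (by simp)
    exact ⟨⟨h u hu u hu, h u hu v hv⟩, h v hv u hu, h v hv v hv⟩
  · rintro ⟨⟨huu, huv⟩, hvu, hvv⟩ x hx y hy
    obtain ⟨a, b, rfl⟩ := Submodule.mem_span_pair.1 hx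
    obtain ⟨c, d, rfl⟩ := Submodule.mem_span_pair.1 hy
    simp [huu, huv, hvu, hvv]

lemma encard_isotropicLines_eq_sum [Fintype ι] (B : (ι → k) →ₛₗ[τ] (ι → k) →ₗ[k] k) :
    (isotropicLines B).encard = ∑ i, ∑ j, (isotropicCell B i j).encard := by
  let cell : ι × ι → Set (Submodule k (ι → k)) := fun P =>
    (fun Q : (ι → k) × (ι → k) => Submodule.span k {Q.1, Q.2}) '' isotropicCell B P.1 P.2
  have hunion : isotropicLines B = ⋃ P, cell P := by
    ext L
    simp only [cell, Set.mem_iUnion, Set.mem_image, Prod.exists]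
    constructor
    · rintro ⟨hL, hB⟩
      obtain ⟨i, j, u, v, h, rfl⟩ := exists_isEchelonPair hL
      exact ⟨i, j, u, v, ⟨h, (forall_mem_span_pair_apply_eq_zero_iff B u v).1 hB⟩, rfl⟩
    · rintro ⟨i, j, u, v, ⟨h, hB⟩, rfl⟩
      exact ⟨h.finrank_span, (forall_mem_span_pair_apply_eq_zero_iff B u v).2 hB⟩
  have hdisj : Pairwise (Function.onFun Disjoint cell) := by
    refine fun P P' hP => Set.disjoint_left.2 ?_
    rintro _ ⟨Q, ⟨h, -⟩, rfl⟩ ⟨Q', ⟨h', -⟩, hspan⟩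
    obtain ⟨hi, hj⟩ := h.pivots_eq h' hspan.symm
    exact hP (Prod.ext hi hj)
  have hcard : ∀ P, (cell P).encard = (isotropicCell B P.1 P.2).encard := fun P => by
    refine Set.InjOn.encard_image ?_
    rintro Q ⟨h, -⟩ Q' ⟨h', -⟩ hspan
    obtain ⟨hu, hv⟩ := h.eq_of_span_eq h' hspan
    exact Prod.ext hu hv
  rw [hunion, Set.encard_iUnion_of_finite hdisj, finsum_eq_sum_of_fintype, Fintype.sum_prod_type]
  simp only [hcard]

lemma encard_isotropicLines_fin_four (B : (Fin 4 → k) →ₛₗ[τ] (Fin 4 → k) →ₗ[k] k) :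
    (isotropicLines B).encard =
      (isotropicCell B 0 1).encard + (isotropicCell B 0 2).encard + (isotropicCell B 0 3).encard +
        (isotropicCell B 1 2).encard + (isotropicCell B 1 3).encard +
          (isotropicCell B 2 3).encard := by
  have hempty : ∀ i j, ¬ i < j → (isotropicCell B i j).encard = 0 := fun i j hij => by
    rw [isotropicCell_eq_empty_of_not_lt _ hij, Set.encard_empty]
  rw [encard_isotropicLines_eq_sum]
  simp [Fin.sum_univ_four, hempty, add_assoc]

end SchubertCells

section SplitForm

variable (k : Type*) [Field k]

/-- The Gram matrix of the split form
`τ (x 0) * y 3 + τ (x 1) * y 2 - τ (x 2) * y 1 - τ (x 3) * y 0`, the representative of the forms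
of full rank whose totally isotropic lines are counted explicitly. -/
def splitMatrix : Matrix (Fin 4) (Fin 4) k :=
  !![0, 0, 0, 1; 0, 0, 1, 0; 0, -1, 0, 0; -1, 0, 0, 0]

lemma isUnit_splitMatrix : IsUnit (splitMatrix k) := by
  refine IsUnit.of_mul_eq_one (-splitMatrix k) ?_
  ext i j
  fin_cases i <;> fin_cases j <;> simp [splitMatrix, Matrix.mul_apply, Fin.sum_univ_four]

variable {k} (τ : k →+* k)

lemma sesqForm_splitMatrix_apply (x y : Fin 4 → k) :
    sesqForm τ (splitMatrix k) x y =
      τ (x 0) * y 3 + τ (x 1) * y 2 - τ (x 2) * y 1 - τ (x 3) * y 0 := by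
  rw [sesqForm_apply]
  simp [splitMatrix, Fin.sum_univ_four, sub_eq_add_neg]

lemma isotropicCell_splitMatrix_zero_one :
    isotropicCell (sesqForm τ (splitMatrix k)) 0 1 =
      (fun t : k × k × k => (![1, 0, t.2.1, t.1], ![0, 1, t.2.2, τ t.2.1])) ''
        ({b | τ b = b} ×ˢ {a | τ (τ a) = a} ×ˢ {c | τ c = c}) := by
  ext ⟨u, v⟩
  rw [mk_mem_isotropicCell]
  constructor
  · rintro ⟨⟨-, -, hu₀, hu₁, hv, hv₁⟩, h⟩
    have hv₀ := hv 0 (by decide)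
    simp only [sesqForm_splitMatrix_apply, hu₀, hu₁, hv₀, hv₁, map_zero, map_one, sub_eq_zero,
      zero_mul, one_mul, mul_zero, mul_one, add_zero, zero_add, sub_zero] at h
    obtain ⟨⟨huu, huv⟩, hvu, hvv⟩ := h
    refine ⟨(u 3, u 2, v 2), ⟨huu.symm, ?_, hvv.symm⟩, Prod.ext ?_ ?_⟩
    · change τ (τ (u 2)) = u 2
      rw [← huv, ← hvu]
    · ext i
      fin_cases i <;> simp [hu₀, hu₁]
    · ext i
      fin_cases i <;> simp [hv₀, hv₁, huv]
  · rintro ⟨⟨b, a, c⟩, ⟨hb, ha, hc⟩, h⟩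
    obtain ⟨rfl, rfl⟩ := Prod.ext_iff.1 h
    refine ⟨⟨by decide, by simp, rfl, rfl, by simp, rfl⟩, ?_⟩
    simp [sesqForm_splitMatrix_apply, ha.out, hb.out, hc.out]

lemma isotropicCell_splitMatrix_zero_two :
    isotropicCell (sesqForm τ (splitMatrix k)) 0 2 =
      (fun t : k × k => (![1, -τ t.2, 0, t.1], ![0, 0, 1, t.2])) ''
        ({b | τ b = b} ×ˢ {c | τ (τ c) = c}) := by
  ext ⟨u, v⟩
  rw [mk_mem_isotropicCell]
  constructor
  · rintro ⟨⟨-, -, hu₀, hu₂, hv, hv₂⟩, h⟩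
    have hv₀ := hv 0 (by decide)
    have hv₁ := hv 1 (by decide)
    simp only [sesqForm_splitMatrix_apply, hu₀, hu₂, hv₀, hv₁, hv₂, map_zero, map_one,
      zero_mul, one_mul, mul_zero, mul_one, add_zero, sub_zero, zero_sub] at h
    obtain ⟨⟨huu, huv⟩, hvu, -⟩ := h
    have hu₁ : u 1 = -τ (v 3) := by linear_combination -hvu
    refine ⟨(u 3, v 3), ⟨(sub_eq_zero.1 huu).symm, ?_⟩, Prod.ext ?_ ?_⟩
    · rw [hu₁, map_neg] at huv
      exact (eq_of_add_neg_eq_zero huv).symm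
    · ext i
      fin_cases i <;> simp [hu₀, hu₁, hu₂]
    · ext i
      fin_cases i <;> simp [hv₀, hv₁, hv₂]
  · rintro ⟨⟨b, c⟩, ⟨hb, hc⟩, h⟩
    obtain ⟨rfl, rfl⟩ := Prod.ext_iff.1 h
    refine ⟨⟨by decide, by simp, rfl, rfl, ?_, rfl⟩, ?_⟩
    · simp [Fin.forall_fin_succ]
    · simp [sesqForm_splitMatrix_apply, hb.out, hc.out]

lemma isotropicCell_splitMatrix_one_three :
    isotropicCell (sesqForm τ (splitMatrix k)) 1 3 =
      (fun a : k => (![0, 1, a, 0], ![0, 0, 0, 1])) '' {a | τ a = a} := by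
  ext ⟨u, v⟩
  rw [mk_mem_isotropicCell]
  constructor
  · rintro ⟨⟨-, hu, hu₁, hu₃, hv, hv₃⟩, ⟨huu, -⟩, -⟩
    have hu₀ := hu 0 (by decide)
    simp only [sesqForm_splitMatrix_apply, hu₀, hu₁, hu₃, map_zero, map_one, sub_eq_zero,
      one_mul, mul_zero, mul_one, zero_add, sub_zero] at huu
    refine ⟨u 2, huu.symm, Prod.ext ?_ ?_⟩
    · ext i
      fin_cases i <;> simp [hu₀, hu₁, hu₃]
    · ext i
      fin_cases i <;> simp [hv, hv₃]
  · rintro ⟨a, ha, h⟩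
    obtain ⟨rfl, rfl⟩ := Prod.ext_iff.1 h
    refine ⟨⟨by decide, by simp, rfl, rfl, ?_, rfl⟩, ?_⟩
    · simp [Fin.forall_fin_succ]
    · simp [sesqForm_splitMatrix_apply, ha.out]

lemma isotropicCell_splitMatrix_two_three :
    isotropicCell (sesqForm τ (splitMatrix k)) 2 3 = {(![0, 0, 1, 0], ![0, 0, 0, 1])} := by
  ext ⟨u, v⟩
  rw [mk_mem_isotropicCell]
  constructor
  · rintro ⟨⟨-, hu, hu₂, hu₃, hv, hv₃⟩, -⟩
    refine Prod.ext ?_ ?_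
    · ext i
      fin_cases i <;> simp [hu, hu₂, hu₃]
    · ext i
      fin_cases i <;> simp [hv, hv₃]
  · intro h
    obtain ⟨rfl, rfl⟩ := Prod.ext_iff.1 h
    refine ⟨⟨by decide, ?_, rfl, rfl, ?_, rfl⟩, ?_⟩
    · simp [Fin.forall_fin_succ]
    · simp [Fin.forall_fin_succ]
    · simp [sesqForm_splitMatrix_apply]

lemma isotropicCell_splitMatrix_zero_three :
    isotropicCell (sesqForm τ (splitMatrix k)) 0 3 = ∅ := by
  refine Set.eq_empty_of_forall_notMem ?_
  rintro ⟨u, v⟩ h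
  obtain ⟨⟨-, -, hu₀, -, hv, hv₃⟩, ⟨-, huv⟩, -⟩ := mk_mem_isotropicCell.1 h
  simp [sesqForm_splitMatrix_apply, hu₀, hv, hv₃] at huv

lemma isotropicCell_splitMatrix_one_two :
    isotropicCell (sesqForm τ (splitMatrix k)) 1 2 = ∅ := by
  refine Set.eq_empty_of_forall_notMem ?_
  rintro ⟨u, v⟩ h
  obtain ⟨⟨-, hu, hu₁, hu₂, hv, hv₂⟩, ⟨-, huv⟩, -⟩ := mk_mem_isotropicCell.1 h
  simp [sesqForm_splitMatrix_apply, hu, hu₁, hu₂, hv, hv₂] at huv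

lemma encard_isotropicLines_splitMatrix :
    (isotropicLines (sesqForm τ (splitMatrix k))).encard =
      {a | τ a = a}.encard ^ 2 * {a | τ (τ a) = a}.encard +
        {a | τ a = a}.encard * {a | τ (τ a) = a}.encard + {a | τ a = a}.encard + 1 := by
  have hinj₀₁ : Function.Injective fun t : k × k × k =>
      ((![1, 0, t.2.1, t.1], ![0, 1, t.2.2, τ t.2.1]) : (Fin 4 → k) × (Fin 4 → k)) := by
    rintro ⟨b, a, c⟩ ⟨b', a', c'⟩ h
    obtain ⟨hu, hv⟩ := Prod.ext_iff.1 h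
    exact Prod.ext (congrFun hu 3) (Prod.ext (congrFun hu 2) (congrFun hv 2))
  have hinj₀₂ : Function.Injective fun t : k × k =>
      ((![1, -τ t.2, 0, t.1], ![0, 0, 1, t.2]) : (Fin 4 → k) × (Fin 4 → k)) := by
    rintro ⟨b, c⟩ ⟨b', c'⟩ h
    obtain ⟨hu, hv⟩ := Prod.ext_iff.1 h
    exact Prod.ext (congrFun hu 3) (congrFun hv 3)
  have hinj₁₃ : Function.Injective fun a : k =>
      ((![0, 1, a, 0], ![0, 0, 0, 1]) : (Fin 4 → k) × (Fin 4 → k)) := fun a a' h =>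
    congrFun (congrArg Prod.fst h) 2
  rw [encard_isotropicLines_fin_four, isotropicCell_splitMatrix_zero_one, hinj₀₁.encard_image,
    isotropicCell_splitMatrix_zero_two, hinj₀₂.encard_image, isotropicCell_splitMatrix_zero_three,
    isotropicCell_splitMatrix_one_two, isotropicCell_splitMatrix_one_three, hinj₁₃.encard_image,
    isotropicCell_splitMatrix_two_three]
  simp only [Set.encard_singleton, Set.encard_empty, Set.encard_prod]
  ring

end SplitForm

section FixedPoints

open Polynomial

variable {k : Type*} [Field k] [IsAlgClosed k]

lemma encard_setOf_pow_eq_self {p Q : ℕ} [CharP k p] (hp : p ∣ Q) (hQ : 1 < Q) :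
    {t : k | t ^ Q = t}.encard = Q := by
  have hroots : {t : k | t ^ Q = t} = (X ^ Q - X : k[X]).rootSet k := by
    ext t
    simp [mem_rootSet, FiniteField.X_pow_card_sub_X_ne_zero k hQ, sub_eq_zero]
  rw [hroots, ← ENat.card_coe_set_eq, ENat.card_eq_coe_fintype_card,
    card_rootSet_eq_natDegree (galois_poly_separable p Q hp) (IsAlgClosed.splits _),
    FiniteField.X_pow_card_sub_X_natDegree_eq k hQ]

end FixedPoints

section ExtremalSurface

variable {k : Type*} [Field k] [IsAlgClosed k]

lemma isLineOn_extremalCone_iff {q : ℕ} (hq : 1 < q) {τ : k →+* k} (hτ : ∀ a, τ a = a ^ q)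
    (A : Matrix (Fin 4) (Fin 4) k) (L : Submodule k (Fin 4 → k)) :
    IsLineOn (extremalCone k q A) L ↔ L ∈ isotropicLines (sesqForm τ A) := by
  have hfrob : ∀ x, frobForm q A x = sesqForm τ A x x := fun x => by
    simp only [frobForm, sesqForm_apply, hτ]
  refine and_congr_right fun _ => ⟨fun hL x hx y hy => ?_, fun hL x hx => ?_⟩
  · obtain ⟨t, ht⟩ := exists_pow_add_mul_eq hq (-1 : k) 1
    have hτt : τ t ≠ t := fun h => by simp [← hτ, h] at ht
    exact apply_eq_zero_of_apply_self_eq_zero hτt (fun z hz => (hfrob z).symm.trans (hL hz)) hx hy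
  · exact (hfrob x).trans (hL x hx x hx)

end ExtremalSurface

/-- A smooth extremal surface `X` of degree `q+1` in ℙ³(k)
contains exactly `(q³+1)(q+1) = q⁴+q³+q+1` lines (equivalently, with
`d = q+1`, exactly `d²(d²-3d+3)` lines). -/
theorem count_lines {k : Type*} [Field k] [IsAlgClosed k]
    (p e q : ℕ) (hp : p.Prime) (hchar : CharP k p) (he : 1 ≤ e) (hq : q = p ^ e)
    (A : Matrix (Fin 4) (Fin 4) k) (hA : IsUnit A) :
    {L : Submodule k (Fin 4 → k) | IsLineOn (extremalCone k q A) L}.ncard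
      = (q ^ 3 + 1) * (q + 1) := by
  have : Fact p.Prime := ⟨hp⟩
  have hpq : p ∣ q := hq ▸ dvd_pow_self p (by lia)
  have hq₁ : 1 < q := hq ▸ Nat.one_lt_pow (by lia) hp.one_lt
  let τ : k →+* k := iterateFrobenius k p e
  have hτ : ∀ a, τ a = a ^ q := fun a => by rw [hq]; rfl
  have hF : {a | τ a = a}.encard = q := by
    simp only [hτ]
    exact encard_setOf_pow_eq_self hpq hq₁
  have hG : {a | τ (τ a) = a}.encard = (q * q : ℕ) := by
    simp only [hτ, ← pow_mul]
    exact encard_setOf_pow_eq_self (hpq.mul_left q) (by nlinarith)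
  have hlines : {L | IsLineOn (extremalCone k q A) L} = isotropicLines (sesqForm τ A) :=
    Set.ext (isLineOn_extremalCone_iff hq₁ hτ A)
  obtain ⟨g, hg⟩ := exists_linearEquiv_sesqForm hq₁ hτ hA (isUnit_splitMatrix k)
  have hcount : (isotropicLines (sesqForm τ A)).encard = ((q ^ 3 + 1) * (q + 1) : ℕ) := by
    rw [encard_isotropicLines_congr g hg, encard_isotropicLines_splitMatrix, hF, hG]
    push_cast
    ring
  rw [hlines, Set.ncard_def, hcount, ENat.toNat_natCast]
end
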